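/- arXiv:2302.04963 — 4 statements merged into one kernel-verified Lean document; each statement's English description precedes it below -/
import Mathlib

section
/- There exists a universal constant C > 0 such that for every d ≥ 2 and every 0 < δ < π/2, there is a finite partition of the unit sphere S^{d−1} ⊂ ℝ^d into N measurable cells, with N ≤ (C/δ)^d, such that every cell has σ_{d−1}-measure exactly 1/N and Euclidean diameter at most δ. -/
open MeasureTheory

/-- The uniform probability measure on the unit sphere of `ℝ^d`, viewed as a measure on
`EuclideanSpace ℝ (Fin d)`: the normalized rotation-invariant surface measure. -/
noncomputable def sphereUniform (d : ℕ) : Measure (EuclideanSpace ℝ (Fin d)) :=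
  (((volume : Measure (EuclideanSpace ℝ (Fin d))).toSphere Set.univ)⁻¹ •
    (volume : Measure (EuclideanSpace ℝ (Fin d))).toSphere).map Subtype.val

/-!
Take a maximal `r`-separated set and a partition of the space subordinate to the closed `r`-balls
around it, whose cells contain the disjoint `r / 2`-balls and thus have mass at least the prescribed
`ε`. The `r`-balls cover a connected space, so their intersection graph is connected. Along a
spanning tree, let every vertex pass the mass of its subtree modulo `ε` to its parent: the mass
passed on is less than `ε`, hence available in the cell, and afterwards all cells have mass a
positive integer multiple of `ε` while their diameter is still at most `6r`. An atomless measure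
takes all intermediate values, which allows one to cut each cell into pieces of mass `ε`. On the
sphere of a `d`-dimensional space, a ball of radius `r` has at least the fraction `(r / 4) ^ d` of
the total mass.
-/

open Function Set

/-- The family of sets `W` is a partition of `A` into measurable cells, indexed by `ι`; cells may be
empty. -/
structure IsMeasurablePartition {X ι : Type*} [MeasurableSpace X] (W : ι → Set X) (A : Set X) :
    Prop where
  measurableSet : ∀ i, MeasurableSet (W i)
  pairwise_disjoint : Pairwise (Disjoint on W)
  iUnion_eq : ⋃ i, W i = A

/-- The partition obtained from `W` by moving the part `R i` of each cell `W i` to the cell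
`W (π i)`, used to correct the masses of the cells. -/
def transferCells {X ι : Type*} (W R : ι → Set X) (π : ι → ι) (i : ι) : Set X :=
  W i \ R i ∪ ⋃ j ∈ π ⁻¹' {i}, R j

namespace IsMeasurablePartition

variable {X Y ι κ : Type*} [MeasurableSpace X] [MeasurableSpace Y] {W : ι → Set X} {A : Set X}

theorem subset (hW : IsMeasurablePartition W A) (i : ι) : W i ⊆ A :=
  hW.iUnion_eq ▸ subset_iUnion W i

theorem sum_measureReal [Fintype ι] (hW : IsMeasurablePartition W A) (μ : Measure X)
    [IsFiniteMeasure μ] : ∑ i, μ.real (W i) = μ.real A := by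
  rw [← hW.iUnion_eq, measureReal_iUnion_fintype hW.pairwise_disjoint hW.measurableSet]

theorem comp_equiv (hW : IsMeasurablePartition W A) (e : κ ≃ ι) :
    IsMeasurablePartition (W ∘ e) A where
  measurableSet i := hW.measurableSet (e i)
  pairwise_disjoint := hW.pairwise_disjoint.comp_of_injective e.injective
  iUnion_eq := (e.surjective.iUnion_comp W).trans hW.iUnion_eq

theorem sigma {κ : ι → Type*} {V : ∀ i, κ i → Set X} (hW : IsMeasurablePartition W A)
    (hV : ∀ i, IsMeasurablePartition (V i) (W i)) :
    IsMeasurablePartition (fun p : Σ i, κ i ↦ V p.1 p.2) A where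
  measurableSet p := (hV p.1).measurableSet p.2
  pairwise_disjoint := by
    rintro ⟨i, k⟩ ⟨j, l⟩ hne
    obtain rfl | hij := eq_or_ne i j
    · exact (hV i).pairwise_disjoint fun hkl ↦ hne (congrArg (Sigma.mk i) hkl)
    · exact (hW.pairwise_disjoint hij).mono ((hV i).subset k) ((hV j).subset l)
  iUnion_eq := by simp only [iUnion_sigma, (hV _).iUnion_eq, hW.iUnion_eq]

theorem fin_cons {n : ℕ} {B : Set X} {V : Fin n → Set X} (hB : MeasurableSet B) (hBA : B ⊆ A)
    (hV : IsMeasurablePartition V (A \ B)) :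
    IsMeasurablePartition (Fin.cons B V : Fin (n + 1) → Set X) A where
  measurableSet := Fin.cases hB hV.measurableSet
  pairwise_disjoint := by
    have hBV (i : Fin n) : Disjoint B (V i) := disjoint_sdiff_right.mono_right (hV.subset i)
    exact pairwise_fin_succ_iff.2 ⟨fun i ↦ (hBV i).symm, hBV, hV.pairwise_disjoint⟩
  iUnion_eq := by
    have hcons : ⋃ i, (Fin.cons B V : Fin (n + 1) → Set X) i = B ∪ ⋃ i, V i := by
      ext x
      simp only [mem_iUnion, mem_union, Fin.exists_fin_succ, Fin.cons_zero, Fin.cons_succ]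
    rw [hcons, hV.iUnion_eq, union_sdiff_cancel hBA]

theorem image {f : X → Y} (hf : MeasurableEmbedding f) (hW : IsMeasurablePartition W A) :
    IsMeasurablePartition (fun i ↦ f '' W i) (f '' A) where
  measurableSet i := hf.measurableSet_image.2 (hW.measurableSet i)
  pairwise_disjoint _ _ hij := (disjoint_image_iff hf.injective).2 (hW.pairwise_disjoint hij)
  iUnion_eq := by rw [← image_iUnion, hW.iUnion_eq]

section Transfer

variable {R : ι → Set X} (π : ι → ι)

theorem transfer [Countable ι] (hW : IsMeasurablePartition W A)
    (hR : ∀ i, MeasurableSet (R i)) (hRW : ∀ i, R i ⊆ W i) :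
    IsMeasurablePartition (transferCells W R π) A where
  measurableSet i := ((hW.measurableSet i).diff (hR i)).union
    (.biUnion (to_countable _) fun j _ ↦ hR j)
  pairwise_disjoint i j hij := by
    have hWR (k l : ι) : Disjoint (W k \ R k) (R l) := by
      obtain rfl | hkl := eq_or_ne k l
      · exact disjoint_sdiff_left
      · exact (hW.pairwise_disjoint hkl).mono sdiff_subset (hRW l)
    have hRR (k l : ι) (hk : π k = i) (hl : π l = j) : Disjoint (R k) (R l) := by
      refine (hW.pairwise_disjoint ?_).mono (hRW k) (hRW l)
      rintro rfl
      exact hij (hk.symm.trans hl)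
    simp only [onFun, transferCells, disjoint_union_left, disjoint_union_right,
      disjoint_iUnion_left, disjoint_iUnion_right]
    exact ⟨⟨(hW.pairwise_disjoint hij).mono sdiff_subset sdiff_subset,
      fun k _ ↦ (hWR j k).symm⟩, fun l hl ↦ ⟨hWR i l, fun k hk ↦ hRR k l hk hl⟩⟩
  iUnion_eq := by
    have hmoved : ⋃ i, ⋃ j ∈ π ⁻¹' {i}, R j = ⋃ j, R j := by
      ext x; simp
    simp only [transferCells, iUnion_union_distrib, hmoved]
    simp only [← iUnion_union_distrib, sdiff_union_of_subset (hRW _), hW.iUnion_eq]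

theorem measureReal_transferCells [Fintype ι] [DecidableEq ι] (hW : IsMeasurablePartition W A)
    (hR : ∀ i, MeasurableSet (R i)) (hRW : ∀ i, R i ⊆ W i) (μ : Measure X) [IsFiniteMeasure μ]
    (i : ι) :
    μ.real (transferCells W R π i) =
      μ.real (W i) - μ.real (R i) + ∑ j with π j = i, μ.real (R j) := by
  have hmoved : ⋃ j ∈ π ⁻¹' {i}, R j = ⋃ j ∈ Finset.univ.filter (π · = i), R j := by
    simp only [mem_preimage, mem_singleton_iff, Finset.mem_filter_univ]
  have hRdisj : Pairwise (Disjoint on R) := fun j k hjk ↦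
    (hW.pairwise_disjoint hjk).mono (hRW j) (hRW k)
  have hdisj : Disjoint (W i \ R i) (⋃ j ∈ π ⁻¹' {i}, R j) := by
    refine disjoint_iUnion₂_right.2 fun j _ ↦ ?_
    obtain rfl | hij := eq_or_ne i j
    · exact disjoint_sdiff_left
    · exact (hW.pairwise_disjoint hij).mono sdiff_subset (hRW j)
  rw [transferCells, measureReal_union hdisj (.biUnion (to_countable _) fun j _ ↦ hR j)
      (measure_ne_top _ _) (measure_ne_top _ _),
    measureReal_sdiff (hRW i) (hR i), hmoved,
    measureReal_biUnion_finset (hRdisj.set_pairwise _) fun j _ ↦ hR j]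

end Transfer

end IsMeasurablePartition

theorem exists_isMeasurablePartition_between {X ι : Type*} [MeasurableSpace X] [Countable ι]
    [LinearOrder ι] [LocallyFiniteOrderBot ι] {B C : ι → Set X} (hB : ∀ i, MeasurableSet (B i))
    (hC : ∀ i, MeasurableSet (C i)) (hBdisj : Pairwise (Disjoint on B)) (hBC : ∀ i, B i ⊆ C i) :
    ∃ W : ι → Set X, IsMeasurablePartition W (⋃ i, C i) ∧ ∀ i, B i ⊆ W i ∧ W i ⊆ C i := by
  have hBm : MeasurableSet (⋃ i, B i) := .iUnion hB
  have hCm (i : ι) : MeasurableSet (disjointed C i) :=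
    disjointedRec (fun _ j ht ↦ ht.diff (hC j)) (hC i)
  have hBW (i j : ι) : Disjoint (B i) (disjointed C j \ ⋃ k, B k) :=
    disjoint_sdiff_right.mono_left (subset_iUnion B i)
  refine ⟨fun i ↦ B i ∪ (disjointed C i \ ⋃ k, B k), ⟨fun i ↦ (hB i).union ((hCm i).diff hBm),
    fun i j hij ↦ ?_, ?_⟩, fun i ↦ ⟨subset_union_left,
    union_subset (hBC i) (sdiff_subset.trans (disjointed_subset C i))⟩⟩
  · exact disjoint_union_left.2 ⟨disjoint_union_right.2 ⟨hBdisj hij, hBW i j⟩,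
      disjoint_union_right.2 ⟨(hBW j i).symm,
        (disjoint_disjointed C hij).mono sdiff_subset sdiff_subset⟩⟩
  · rw [iUnion_union_distrib, ← iUnion_sdiff, iUnion_disjointed,
      union_sdiff_cancel (iUnion_mono hBC)]

section IntermediateMeasure

theorem continuous_measureReal_Iic (μ : Measure ℝ) [IsFiniteMeasure μ] [NullSingletonClass μ] :
    Continuous fun t ↦ μ.real (Iic t) := by
  have hprim (t : ℝ) : μ.real (Iic t) = μ.real (Iic 0) + ∫ _ in (0 : ℝ)..t, (1 : ℝ) ∂μ := by
    rw [← intervalIntegral.integral_Iic_sub_Iic integrableOn_const integrableOn_const]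
    simp
  rw [funext hprim]
  exact continuous_const.add <|
    intervalIntegral.continuous_primitive (fun _ _ ↦ intervalIntegrable_const) 0

theorem exists_measurable_injective_Ioo (X : Type*) [MeasurableSpace X]
    [MeasurableSpace.CountablySeparated X] :
    ∃ f : X → ℝ, Measurable f ∧ Injective f ∧ ∀ x, f x ∈ Ioo (0 : ℝ) 1 := by
  obtain ⟨g, hg, hginj⟩ := MeasurableSpace.measurable_injection_nat_bool_of_countablySeparated X
  have hemb := measurableEmbedding_embeddingReal (ℕ → Bool)
  exact ⟨fun x ↦ Real.sigmoid (embeddingReal (ℕ → Bool) (g x)),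
    Real.sigmoid_monotone.measurable.comp (hemb.measurable.comp hg),
    Real.sigmoid_injective.comp (hemb.injective.comp hginj),
    fun x ↦ ⟨Real.sigmoid_pos _, Real.sigmoid_lt_one _⟩⟩

variable {X : Type*} [MeasurableSpace X] [MeasurableSpace.CountablySeparated X]
  (μ : Measure X) [IsFiniteMeasure μ] [NullSingletonClass μ] {A : Set X}

theorem exists_measurableSet_subset_measureReal_eq (hA : MeasurableSet A) {c : ℝ}
    (hc : c ∈ Icc 0 (μ.real A)) : ∃ B ⊆ A, MeasurableSet B ∧ μ.real B = c := by
  obtain ⟨f, hf, hinj, hf01⟩ := exists_measurable_injective_Ioo X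
  let κ : Measure ℝ := (μ.restrict A).map f
  have hκ (t : ℝ) : κ.real (Iic t) = μ.real (f ⁻¹' Iic t ∩ A) := by
    rw [map_measureReal_apply hf measurableSet_Iic,
      measureReal_restrict_apply (hf measurableSet_Iic)]
  have : NullSingletonClass κ := ⟨fun t ↦ by
    rw [Measure.map_apply hf (measurableSet_singleton t)]
    exact (subsingleton_singleton.preimage hinj).measure_zero _⟩
  have h0 : κ.real (Iic 0) = 0 := by
    have hempty : f ⁻¹' Iic 0 = ∅ := eq_empty_of_forall_notMem fun x hx ↦ (hf01 x).1.not_ge hx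
    rw [hκ, hempty, empty_inter, measureReal_empty]
  have h1 : κ.real (Iic 1) = μ.real A := by
    have huniv : f ⁻¹' Iic 1 = univ := eq_univ_of_forall fun x ↦ (hf01 x).2.le
    rw [hκ, huniv, univ_inter]
  obtain ⟨t, -, ht⟩ := intermediate_value_Icc zero_le_one
    (continuous_measureReal_Iic κ).continuousOn (h0.symm ▸ h1.symm ▸ hc)
  exact ⟨f ⁻¹' Iic t ∩ A, inter_subset_right, (hf measurableSet_Iic).inter hA, (hκ t).symm.trans ht⟩

theorem exists_isMeasurablePartition_measureReal_eq (hA : MeasurableSet A) {n : ℕ}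
    {c : Fin (n + 1) → ℝ} (hc : ∀ i, 0 ≤ c i) (hsum : ∑ i, c i = μ.real A) :
    ∃ W : Fin (n + 1) → Set X, IsMeasurablePartition W A ∧ ∀ i, μ.real (W i) = c i := by
  induction n generalizing A with
  | zero =>
    refine ⟨fun _ ↦ A, ⟨fun _ ↦ hA, Subsingleton.pairwise (α := Fin 1), iUnion_const A⟩,
      Fin.forall_fin_one.2 ?_⟩
    rw [← hsum, Fin.sum_univ_one]
  | succ n ih =>
    rw [Fin.sum_univ_succ] at hsum
    have htail : 0 ≤ ∑ i : Fin (n + 1), c i.succ := Finset.sum_nonneg fun i _ ↦ hc i.succ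
    obtain ⟨B, hBA, hB, hBc⟩ :=
      exists_measurableSet_subset_measureReal_eq μ hA (c := c 0) ⟨hc 0, by linarith⟩
    obtain ⟨V, hV, hVc⟩ := ih (hA.diff hB) (c := fun i ↦ c i.succ) (fun i ↦ hc i.succ) <| by
      rw [measureReal_sdiff hBA hB, hBc]
      linarith
    exact ⟨Fin.cons B V, hV.fin_cons hB hBA, Fin.cases hBc hVc⟩

end IntermediateMeasure

theorem exists_eq_add_sum_of_wellFounded {ι A : Type*} [Fintype ι] [AddCommMonoid A]
    {r : ι → ι → Prop} [DecidableRel r] (hr : WellFounded r) (w : ι → A) :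
    ∃ f : ι → A, ∀ i, f i = w i + ∑ j with r j i, f j := by
  let F (i : ι) (g : ∀ j, r j i → A) : A :=
    w i + ∑ j, if h : r j i then g j h else 0
  refine ⟨hr.fix F, fun i ↦ ?_⟩
  rw [hr.fix_eq]
  simp only [F, Finset.sum_filter, dite_eq_ite]

section Flow

variable {ι : Type*} {G : SimpleGraph ι}

theorem exists_adj_dist_lt (hG : G.Connected) {i j : ι} (hij : i ≠ j) :
    ∃ k, G.Adj i k ∧ G.dist k j < G.dist i j := by
  obtain ⟨p, hp⟩ := hG.exists_walk_length_eq_dist i j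
  cases p with
  | nil => exact (hij rfl).elim
  | cons hik q => exact ⟨_, hik, hp ▸ Nat.lt_succ_of_le (SimpleGraph.dist_le q)⟩

theorem exists_flow [Fintype ι] [DecidableEq ι] {A : Type*} [AddCommGroup A]
    (hG : G.Connected) {w : ι → A} (hw : ∑ i, w i = 0) :
    ∃ (π : ι → ι) (f : ι → A), (∀ i, π i = i ∨ G.Adj i (π i)) ∧
      ∀ i, f i = w i + ∑ j with π j = i, f j := by
  obtain ⟨ρ⟩ := hG.nonempty
  have hparent (i : ι) : ∃ k, (k = i ∨ G.Adj i k) ∧ (i ≠ ρ → G.dist k ρ < G.dist i ρ) := by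
    obtain rfl | hi := eq_or_ne i ρ
    · exact ⟨i, .inl rfl, fun h ↦ (h rfl).elim⟩
    · obtain ⟨k, hik, hk⟩ := exists_adj_dist_lt hG hi
      exact ⟨k, .inr hik, fun _ ↦ hk⟩
  choose π hadj hlt using hparent
  have hwf : WellFounded fun j i ↦ j ∈ Finset.univ.erase ρ ∧ π j = i := by
    refine Subrelation.wf ?_ (Finite.wellFounded_of_trans_of_irrefl
      (InvImage (· > ·) fun i ↦ G.dist i ρ))
    rintro j _ ⟨hj, rfl⟩
    exact hlt j (Finset.ne_of_mem_erase hj)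
  obtain ⟨f, hf⟩ := exists_eq_add_sum_of_wellFounded hwf w
  simp only [← Finset.filter_filter, Finset.filter_univ_mem] at hf
  -- The flow out of the root is the total weight `0`, so the loop `π ρ = ρ` carries nothing.
  have hρ : f ρ = 0 := by
    have htotal : ∑ i, f i = ∑ j ∈ Finset.univ.erase ρ, f j := by
      rw [Finset.sum_congr rfl fun i _ ↦ hf i, Finset.sum_add_distrib, hw, zero_add,
        Finset.sum_fiberwise]
    simpa only [← Finset.add_sum_erase _ f (Finset.mem_univ ρ), add_eq_right] using htotal
  refine ⟨π, f, hadj, fun i ↦ ?_⟩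
  have herase : ∑ j ∈ Finset.univ.erase ρ with π j = i, f j = ∑ j with π j = i, f j := by
    rw [Finset.sum_filter, Finset.sum_filter, Finset.sum_erase _ (by simp [hρ])]
  rw [← herase, ← hf]

theorem exists_flow_mod [Fintype ι] [DecidableEq ι] (hG : G.Connected) {ε : ℝ} (hε : 0 < ε)
    {w : ι → ℝ} {N : ℤ} (hw : ∑ i, w i = N * ε) :
    ∃ (π : ι → ι) (f : ι → ℝ), (∀ i, π i = i ∨ G.Adj i (π i)) ∧ (∀ i, f i ∈ Ico 0 ε) ∧
      ∀ i, ∃ k : ℤ, w i - f i + ∑ j with π j = i, f j = k * ε := by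
  have : Fact (0 < ε) := ⟨hε⟩
  -- Solve the flow equation exactly in `ℝ / εℤ`, then lift the flow to `[0, ε)`.
  let q : ℝ →+ AddCircle ε := QuotientAddGroup.mk' (AddSubgroup.zmultiples ε)
  have hq {x : ℝ} : q x = 0 ↔ ∃ k : ℤ, x = k * ε := by
    simp only [← zsmul_eq_mul, eq_comm (a := x)]
    exact AddCircle.coe_eq_zero_iff ε
  have hqw : ∑ i, q (w i) = 0 := by
    rw [← map_sum, hq]
    exact ⟨N, hw⟩
  obtain ⟨π, g, hπ, hg⟩ := exists_flow hG hqw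
  choose f hf hfg using fun i ↦ AddCircle.eq_coe_Ico (g i)
  replace hfg (i : ι) : q (f i) = g i := hfg i
  refine ⟨π, f, hπ, hf, fun i ↦ hq.1 ?_⟩
  simp only [map_add, map_sub, map_sum, hfg]
  rw [sub_add_eq_add_sub, ← hg, sub_self]

end Flow

/-- The graph whose edges join the indices of the distinct sets `C i` and `C j` that meet: the
`1`-skeleton of the nerve of the family `C`. Mass is transferred between cells along its edges. -/
def intersectionGraph {X ι : Type*} (C : ι → Set X) : SimpleGraph ι :=
  .fromRel fun i j ↦ (C i ∩ C j).Nonempty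

theorem intersectionGraph_connected {X ι : Type*} [TopologicalSpace X] [ConnectedSpace X]
    [Finite ι] {C : ι → Set X} (hC : ∀ i, IsClosed (C i)) (hne : ∀ i, (C i).Nonempty)
    (hcover : ⋃ i, C i = univ) : (intersectionGraph C).Connected := by
  set G := intersectionGraph C
  have hι : Nonempty ι := (mem_iUnion.1 (hcover ▸ mem_univ (Classical.arbitrary X))).nonempty
  refine (SimpleGraph.connected_iff _).2 ⟨fun i j ↦ by_contra fun hij ↦ ?_, hι⟩
  let U (s : Set ι) : Set X := ⋃ k ∈ s, C k
  have hU (s : Set ι) : IsClosed (U s) := s.toFinite.isClosed_biUnion fun k _ ↦ hC k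
  have hUne {s : Set ι} {k : ι} (hk : k ∈ s) : (univ ∩ U s).Nonempty := by
    rw [univ_inter]
    exact (hne k).mono (subset_biUnion_of_mem hk)
  have hUcompl (s : Set ι) : univ ⊆ U s ∪ U sᶜ := by
    rw [← biUnion_union, union_compl_self, biUnion_univ, hcover]
  obtain ⟨x, -, hx, hx'⟩ := isPreconnected_closed_iff.1 isPreconnected_univ _ _ (hU _) (hU _)
    (hUcompl {k | G.Reachable i k}) (hUne (.refl i)) (hUne hij)
  obtain ⟨k, hik, hxk⟩ := mem_iUnion₂.1 hx
  obtain ⟨l, hil, hxl⟩ := mem_iUnion₂.1 hx'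
  have hkl : G.Adj k l := ⟨fun h ↦ hil (h ▸ hik), .inl ⟨x, hxk, hxl⟩⟩
  exact hil (hik.trans hkl.reachable)

section Equipartition

variable {X ι : Type*} [MeasurableSpace X] [MeasurableSpace.CountablySeparated X] [Finite ι]
  (μ : Measure X) [IsFiniteMeasure μ] [NullSingletonClass μ] {W : ι → Set X} {A : Set X} {ε : ℝ}

theorem exists_isMeasurablePartition_measureReal_eq_mul {G : SimpleGraph ι} (hG : G.Connected)
    (hε : 0 < ε) (hW : IsMeasurablePartition W A) (hWε : ∀ i, ε ≤ μ.real (W i)) {N : ℕ}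
    (hA : μ.real A = N * ε) :
    ∃ (V : ι → Set X) (k : ι → ℕ), IsMeasurablePartition V A ∧
      (∀ i, μ.real (V i) = (k i + 1) * ε) ∧ ∀ i, V i ⊆ ⋃ j ∈ insert i (G.neighborSet i), W j := by
  classical
  cases nonempty_fintype ι
  obtain ⟨π, f, hπ, hf, hk⟩ := exists_flow_mod hG hε (w := fun i ↦ μ.real (W i)) (N := N) <| by
    rw [hW.sum_measureReal, hA, Int.cast_natCast]
  choose R hRW hR hRf using fun i ↦ exists_measurableSet_subset_measureReal_eq μ
    (hW.measurableSet i) (c := f i) ⟨(hf i).1, (hf i).2.le.trans (hWε i)⟩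
  have hmass (i : ι) : ∃ k : ℕ, μ.real (transferCells W R π i) = (k + 1) * ε := by
    rw [hW.measureReal_transferCells π hR hRW]
    simp only [hRf]
    obtain ⟨k, hk⟩ := hk i
    have hpos : 0 < k * ε := by
      have : 0 ≤ ∑ j with π j = i, f j := Finset.sum_nonneg fun j _ ↦ (hf j).1
      linarith [hWε i, (hf i).2]
    obtain ⟨n, rfl⟩ := Int.eq_succ_of_zero_lt (Int.cast_pos.1 (pos_of_mul_pos_left hpos hε.le))
    exact ⟨n, by simpa only [Nat.succ_eq_add_one, Nat.cast_add_one, Int.cast_add,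
      Int.cast_natCast, Int.cast_one] using hk⟩
  choose k hVk using hmass
  refine ⟨transferCells W R π, k, hW.transfer π hR hRW, hVk, fun i ↦ union_subset ?_ ?_⟩
  · exact sdiff_subset.trans (subset_biUnion_of_mem (u := W) (mem_insert i _))
  · refine iUnion₂_subset fun j hj ↦ (hRW j).trans (subset_biUnion_of_mem (u := W) ?_)
    obtain rfl : π j = i := hj
    exact (hπ j).imp Eq.symm SimpleGraph.Adj.symm

theorem IsMeasurablePartition.exists_refinement_measureReal_eq (hW : IsMeasurablePartition W A)
    (hε : 0 < ε) {k : ι → ℕ} (hWk : ∀ i, μ.real (W i) = (k i + 1) * ε) {N : ℕ}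
    (hA : μ.real A = N * ε) :
    ∃ V : Fin N → Set X, IsMeasurablePartition V A ∧ (∀ n, μ.real (V n) = ε) ∧
      ∀ n, ∃ i, V n ⊆ W i := by
  cases nonempty_fintype ι
  have hcut (i : ι) := exists_isMeasurablePartition_measureReal_eq μ (hW.measurableSet i)
    (c := fun _ : Fin (k i + 1) ↦ ε) (fun _ ↦ hε.le) (by simp [hWk])
  choose U hU hUε using hcut
  have hpart := hW.sigma hU
  have hcard : Fintype.card (Σ i, Fin (k i + 1)) = N := by
    have hsum := hpart.sum_measureReal μ
    simp only [hUε, hA, Finset.sum_const, Finset.card_univ, nsmul_eq_mul] at hsum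
    exact_mod_cast mul_right_cancel₀ hε.ne' hsum
  let e := (Fintype.equivFinOfCardEq hcard).symm
  exact ⟨_, hpart.comp_equiv e, fun n ↦ hUε _ _, fun n ↦ ⟨(e n).1, (hU _).subset _⟩⟩

end Equipartition

section Metric

variable {X : Type*} [PseudoMetricSpace X] {r : ℝ}

theorem exists_separated_cover {A : Set X} (hA : TotallyBounded A) (hr : 0 < r) :
    ∃ (n : ℕ) (p : Fin n → X), Pairwise (fun i j ↦ r < dist (p i) (p j)) ∧
      A ⊆ ⋃ i, Metric.closedBall (p i) r := by
  lift r to NNReal using hr.le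
  obtain ⟨F, -, hFfin, hF⟩ := Metric.exists_finite_isCover_of_totallyBounded (ε := r / 2)
    (half_pos (NNReal.coe_pos.1 hr)).ne' hA
  have hpack : Metric.packingNumber r A ≠ ⊤ := by
    have h := Metric.packingNumber_two_mul_le_externalCoveringNumber (r / 2) A
    rw [mul_div_cancel₀ r two_ne_zero] at h
    exact ne_top_of_le_ne_top (encard_ne_top_iff.2 hFfin)
      (h.trans hF.externalCoveringNumber_le_encard)
  have hfin : (Metric.maximalSeparatedSet r A).Finite := by
    rwa [← encard_ne_top_iff, Metric.encard_maximalSeparatedSet hpack]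
  obtain ⟨n, p, hp, hrange⟩ := hfin.fin_param
  refine ⟨n, p, fun i j hij ↦ ?_, ?_⟩
  · have h : (r : ENNReal) < edist (p i) (p j) := Metric.isSeparated_maximalSeparatedSet
      (hrange ▸ mem_range_self i) (hrange ▸ mem_range_self j) (hp.ne hij)
    rw [edist_nndist] at h
    exact_mod_cast h
  · rw [← biUnion_range (g := fun x ↦ Metric.closedBall x (r : ℝ)), hrange]
    exact (Metric.isCover_maximalSeparatedSet hpack).subset_iUnion_closedBall

theorem biUnion_neighborSet_closedBall_subset {ι : Type*} (p : ι → X) (r : ℝ) (i : ι) :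
    ⋃ j ∈ insert i ((intersectionGraph fun k ↦ Metric.closedBall (p k) r).neighborSet i),
      Metric.closedBall (p j) r ⊆ Metric.closedBall (p i) (3 * r) := by
  refine iUnion₂_subset fun j hj x hx ↦ ?_
  have hxj : dist x (p j) ≤ r := hx
  obtain rfl | ⟨-, ⟨y, hyi, hyj⟩ | ⟨y, hyj, hyi⟩⟩ := hj
  · exact hxj.trans (by linarith [dist_nonneg.trans hxj])
  all_goals
    have hyi : dist y (p i) ≤ r := hyi
    have hyj : dist (p j) y ≤ r := Metric.mem_closedBall'.1 hyj
    exact (dist_triangle4 x (p j) y (p i)).trans (by linarith)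

variable [CompactSpace X] [ConnectedSpace X] [MeasurableSpace X] [OpensMeasurableSpace X]
  [MeasurableSpace.CountablySeparated X]

theorem exists_isMeasurablePartition_diam_le (μ : Measure X) [IsFiniteMeasure μ]
    [NullSingletonClass μ] {ε : ℝ} (hr : 0 < r) (hε : 0 < ε)
    (hball : ∀ x, ε ≤ μ.real (Metric.ball x (r / 2))) {N : ℕ} (hN : μ.real univ = N * ε) :
    ∃ V : Fin N → Set X, IsMeasurablePartition V univ ∧ (∀ n, μ.real (V n) = ε) ∧
      ∀ n, Metric.diam (V n) ≤ 6 * r := by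
  obtain ⟨m, p, hsep, hcover⟩ := exists_separated_cover (isCompact_univ (X := X)).totallyBounded hr
  let C (i : Fin m) := Metric.closedBall (p i) r
  have hconn : (intersectionGraph C).Connected :=
    intersectionGraph_connected (fun _ ↦ Metric.isClosed_closedBall)
      (fun _ ↦ Metric.nonempty_closedBall.2 hr.le) (univ_subset_iff.1 hcover)
  obtain ⟨W, hW, hWC⟩ := exists_isMeasurablePartition_between
    (B := fun i ↦ Metric.ball (p i) (r / 2)) (C := C)
    (fun i ↦ Metric.isOpen_ball.measurableSet) (fun i ↦ Metric.isClosed_closedBall.measurableSet)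
    (fun i j hij ↦ Metric.ball_disjoint_ball (by linarith [hsep hij]))
    (fun i ↦ (Metric.ball_subset_ball (half_le_self hr.le)).trans Metric.ball_subset_closedBall)
  rw [univ_subset_iff.1 hcover] at hW
  obtain ⟨U, k, hU, hUk, hUW⟩ := exists_isMeasurablePartition_measureReal_eq_mul μ hconn hε hW
    (fun i ↦ (hball (p i)).trans (measureReal_mono (hWC i).1)) hN
  obtain ⟨V, hV, hVε, hVU⟩ := hU.exists_refinement_measureReal_eq μ hε hUk hN
  refine ⟨V, hV, hVε, fun n ↦ ?_⟩
  obtain ⟨i, hi⟩ := hVU n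
  have hball : V n ⊆ Metric.closedBall (p i) (3 * r) :=
    hi.trans <| (hUW i).trans <| (iUnion₂_mono fun j _ ↦ (hWC j).2).trans <|
      biUnion_neighborSet_closedBall_subset p r i
  calc Metric.diam (V n) ≤ Metric.diam (Metric.closedBall (p i) (3 * r)) :=
        Metric.diam_mono hball Metric.isBounded_closedBall
    _ ≤ 2 * (3 * r) := Metric.diam_closedBall (by positivity)
    _ = 6 * r := by ring

end Metric

theorem natCeil_pow_le_two_mul_pow {x : ℝ} (hx : 1 ≤ x) {d : ℕ} (hd : d ≠ 0) :
    (⌈x ^ d⌉₊ : ℝ) ≤ (2 * x) ^ d := by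
  calc (⌈x ^ d⌉₊ : ℝ) ≤ 2 * x ^ d :=
        Nat.ceil_le_two_mul ((by norm_num : (2⁻¹ : ℝ) ≤ 1).trans (one_le_pow₀ hx))
    _ ≤ 2 ^ d * x ^ d := by gcongr; exact le_self_pow₀ one_le_two hd
    _ = (2 * x) ^ d := (mul_pow ..).symm

section Sphere

variable {E : Type*} [NormedAddCommGroup E] [NormedSpace ℝ E] [FiniteDimensional ℝ E]
  [MeasurableSpace E] [BorelSpace E] (μ : Measure E) [μ.IsAddHaarMeasure]

open scoped Pointwise in
theorem nullSingletonClass_toSphere (hE : 1 < Module.finrank ℝ E) :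
    NullSingletonClass μ.toSphere := by
  refine ⟨fun x ↦ ?_⟩
  have hcone : Ioo (0 : ℝ) 1 • (Subtype.val '' {x}) ⊆ (ℝ ∙ (x : E) : Set E) := by
    rw [image_singleton]
    rintro _ ⟨t, -, _, rfl, rfl⟩
    exact Submodule.smul_mem _ t (Submodule.mem_span_singleton_self _)
  have hspan : ℝ ∙ (x : E) ≠ ⊤ := fun htop ↦ by
    have hdim := finrank_span_singleton (K := ℝ) (Metric.ne_of_mem_sphere x.2 one_ne_zero)
    rw [htop, finrank_top] at hdim
    exact hE.ne' hdim
  rw [Measure.toSphere_apply' _ (measurableSet_singleton x),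
    measure_mono_null hcone (Measure.addHaar_submodule μ _ hspan), mul_zero]

theorem pow_mul_toSphere_univ_le_toSphere_ball {r : ℝ} (hr : 0 < r) (hr2 : r ≤ 2)
    (x : Metric.sphere (0 : E) 1) :
    (r / 4) ^ Module.finrank ℝ E * μ.toSphere.real univ ≤ μ.toSphere.real (Metric.ball x r) := by
  have : Nontrivial E := ⟨x, 0, ne_of_apply_ne norm (by simp)⟩
  have hbound : (Measure.toSphereBallBound (Module.finrank ℝ E) r : ℝ) =
      Module.finrank ℝ E * (r / 4) ^ Module.finrank ℝ E := by
    rw [Measure.toSphereBallBound, if_pos ⟨Module.finrank_pos.ne', hr⟩]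
    simp [hr.le, hr2]
  refine le_trans (le_of_eq ?_)
    (μ.toSphereBallBound_mul_measureReal_unitBall_le_toSphere_ball hr x)
  rw [hbound, Measure.toSphere_real_apply_univ]
  ring

theorem exists_isMeasurablePartition_toSphere_diam_le (hE : 1 < Module.finrank ℝ E) {δ : ℝ}
    (hδ : 0 < δ) (hδ24 : δ ≤ 24) {N : ℕ} (hN : (48 / δ) ^ Module.finrank ℝ E ≤ N) :
    ∃ V : Fin N → Set (Metric.sphere (0 : E) 1), IsMeasurablePartition V univ ∧
      (∀ n, μ.toSphere.real (V n) = μ.toSphere.real univ / N) ∧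
      ∀ n, Metric.diam (V n) ≤ δ := by
  have hNpos : (0 : ℝ) < N := (pow_pos (by positivity) _).trans_le hN
  have := nullSingletonClass_toSphere μ hE
  have : Nontrivial E := Module.nontrivial_of_finrank_pos (zero_lt_one.trans hE)
  have hrank : 1 < Module.rank ℝ E := Module.one_lt_rank_of_one_lt_finrank hE
  have : ConnectedSpace (Metric.sphere (0 : E) 1) :=
    isConnected_iff_connectedSpace.1 (isConnected_sphere hrank 0 zero_le_one)
  have : NeZero μ.toSphere := ⟨μ.toSphere_ne_zero⟩
  have htotal : 0 < μ.toSphere.real univ := measureReal_univ_pos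
  have hcap (x : Metric.sphere (0 : E) 1) :
      μ.toSphere.real univ / N ≤ μ.toSphere.real (Metric.ball x (δ / 6 / 2)) :=
    calc μ.toSphere.real univ / N ≤ μ.toSphere.real univ / (48 / δ) ^ Module.finrank ℝ E := by
          gcongr
      _ = (δ / 6 / 2 / 4) ^ Module.finrank ℝ E * μ.toSphere.real univ := by
          rw [div_eq_inv_mul, ← inv_pow, inv_div]
          ring_nf
      _ ≤ _ := pow_mul_toSphere_univ_le_toSphere_ball μ (by positivity) (by linarith) x
  obtain ⟨V, hV, hVN, hdiam⟩ := exists_isMeasurablePartition_diam_le μ.toSphere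
    (r := δ / 6) (by positivity) (by positivity) hcap (mul_div_cancel₀ _ hNpos.ne').symm
  exact ⟨V, hV, hVN, fun n ↦ (hdiam n).trans_eq (mul_div_cancel₀ _ (by norm_num))⟩

theorem map_val_normalized_toSphere_image [Nontrivial E] {W : Set (Metric.sphere (0 : E) 1)}
    {N : ℕ} (hN : 0 < N) (hW : μ.toSphere.real W = μ.toSphere.real univ / N) :
    ((μ.toSphere univ)⁻¹ • μ.toSphere).map Subtype.val (Subtype.val '' W) = 1 / N := by
  have huniv : μ.toSphere univ ≠ 0 := Measure.measure_univ_ne_zero.2 μ.toSphere_ne_zero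
  rw [(MeasurableEmbedding.subtype_coe Metric.isClosed_sphere.measurableSet).map_apply,
    preimage_image_eq _ Subtype.val_injective, Measure.smul_apply, smul_eq_mul,
    ← ofReal_measureReal (s := W), hW, ENNReal.ofReal_div_of_pos (Nat.cast_pos.2 hN),
    ofReal_measureReal, ENNReal.ofReal_natCast, ← mul_div_assoc,
    ENNReal.inv_mul_cancel huniv (measure_ne_top _ _)]

theorem sphere_equal_volume_partition_general (hE : 1 < Module.finrank ℝ E) {δ : ℝ} (hδ : 0 < δ)
    (hδ24 : δ ≤ 24) :
    ∃ (N : ℕ) (V : Fin N → Set E), (N : ℝ) ≤ (96 / δ) ^ Module.finrank ℝ E ∧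
      IsMeasurablePartition V (Metric.sphere 0 1) ∧
      (∀ i, ((μ.toSphere univ)⁻¹ • μ.toSphere).map Subtype.val (V i) = 1 / N) ∧
      ∀ i, Metric.diam (V i) ≤ δ := by
  have : Nontrivial E := Module.nontrivial_of_finrank_pos (zero_lt_one.trans hE)
  obtain ⟨W, hW, hWμ, hdiam⟩ :=
    exists_isMeasurablePartition_toSphere_diam_le μ hE hδ hδ24 (Nat.le_ceil _)
  have hN : (⌈(48 / δ) ^ Module.finrank ℝ E⌉₊ : ℝ) ≤ (96 / δ) ^ Module.finrank ℝ E := by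
    have h := natCeil_pow_le_two_mul_pow ((one_le_div hδ).2 (by linarith : δ ≤ 48))
      (zero_lt_one.trans hE).ne'
    rwa [← mul_div_assoc, (by norm_num : (2 : ℝ) * 48 = 96)] at h
  have hV := hW.image (MeasurableEmbedding.subtype_coe Metric.isClosed_sphere.measurableSet)
  rw [Subtype.coe_image_univ] at hV
  exact ⟨_, fun i ↦ Subtype.val '' W i, hN, hV,
    fun i ↦ map_val_normalized_toSphere_image μ (Nat.ceil_pos.2 (by positivity)) (hWμ i),
    fun i ↦ (isometry_subtype_coe.diam_image (W i)).trans_le (hdiam i)⟩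

end Sphere

/-- For any `0 < δ < π/2`, the unit sphere `S^{d-1}` can be partitioned into
`N = (O(1)/δ)^d` measurable cells of equal measure, each of diameter at most `δ`. -/
theorem sphere_equal_volume_partition :
    ∃ C : ℝ, 0 < C ∧ ∀ d : ℕ, 2 ≤ d → ∀ δ : ℝ, 0 < δ → δ < Real.pi / 2 →
      ∃ (N : ℕ) (V : Fin N → Set (EuclideanSpace ℝ (Fin d))),
        (N : ℝ) ≤ (C / δ) ^ d ∧
        (∀ i, MeasurableSet (V i)) ∧
        (∀ i j, i ≠ j → Disjoint (V i) (V j)) ∧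
        (⋃ i, V i) = Metric.sphere (0 : EuclideanSpace ℝ (Fin d)) 1 ∧
        (∀ i, sphereUniform d (V i) = 1 / (N : ENNReal)) ∧
        (∀ i, Metric.diam (V i) ≤ δ) := by
  refine ⟨96, by norm_num, fun d hd δ hδ hδπ ↦ ?_⟩
  have hfinrank : Module.finrank ℝ (EuclideanSpace ℝ (Fin d)) = d := finrank_euclideanSpace_fin
  obtain ⟨N, V, hN, hV, hVσ, hdiam⟩ :=
    sphere_equal_volume_partition_general (volume : Measure (EuclideanSpace ℝ (Fin d)))
      (hd.trans_eq hfinrank.symm) hδ (by linarith [Real.pi_lt_four])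
  rw [hfinrank] at hN
  exact ⟨N, V, hN, hV.measurableSet, fun _ _ hij ↦ hV.pairwise_disjoint hij, hV.iUnion_eq, hVσ,
    hdiam⟩
end

section
/- Let d ≥ 1, let P : ℝ^d → ℝ^d be an orthogonal projection of rank r, and let x be a random vector distributed according to σ_{d−1}. Then for every t > 0, both ℙ(‖P x‖² − r/d ≥ t) ≤ e^{−d t²} and ℙ(‖P x‖² − r/d ≤ −t) ≤ e^{−d t²}. -/
open MeasureTheory
open scoped RealInnerProductSpace

/-!
Rotation invariance makes the integral over the sphere of the derivative of a function along a
linear skew-adjoint vector field vanish. Summed over the infinitesimal rotations of an orthonormal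
basis, this is the divergence theorem on the sphere, which for the fields `φ (‖P x‖ ^ 2) • P x`
becomes the Stein identity `d 𝔼[(X - r / d) φ(X)] = 2 𝔼[X (1 - X) φ'(X)]` of the squared norm
`X = ‖P x‖ ^ 2`. For `φ = exp (l (· - r / d))` the bound `X (1 - X) ≤ 1 / 4` gives
`M' ≤ l M / (2 d)` for the moment generating function `M` of `X - r / d` at `l ≥ 0`, and the reverse
inequality at `l ≤ 0`. Thus `X - r / d` is sub-Gaussian with variance proxy `1 / (2 d)`, and
Chernoff's bound applies to both tails.
-/

open ProbabilityTheory InnerProductSpace Module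
open scoped NNReal ENNReal Pointwise

section Subgaussian

variable {Ω : Type*} [MeasurableSpace Ω] {μ : Measure Ω} {X τ : Ω → ℝ} {c : ℝ≥0}

lemma measure_ge_le_ofReal_exp_of_hasSubgaussianMGF [IsFiniteMeasure μ]
    (hX : HasSubgaussianMGF X c μ) {t : ℝ} (ht : 0 ≤ t) :
    μ {ω | t ≤ X ω} ≤ ENNReal.ofReal (Real.exp (-t ^ 2 / (2 * c))) := by
  rw [← ofReal_measureReal]
  exact ENNReal.ofReal_le_ofReal (hX.measure_ge_le ht)

variable [IsProbabilityMeasure μ]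

lemma mgf_le_exp_of_stein (hX : ∀ l : ℝ, Integrable (fun ω ↦ Real.exp (l * X ω)) μ)
    (hτ : ∀ᵐ ω ∂μ, τ ω ∈ Set.Icc 0 (c : ℝ))
    (hstein : ∀ l : ℝ, ∫ ω, X ω * Real.exp (l * X ω) ∂μ = l * ∫ ω, τ ω * Real.exp (l * X ω) ∂μ)
    {l : ℝ} (hl : 0 ≤ l) : mgf X μ l ≤ Real.exp (c * l ^ 2 / 2) := by
  have hderiv (s : ℝ) : HasDerivAt (mgf X μ) (s * ∫ ω, τ ω * Real.exp (s * X ω) ∂μ) s := by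
    rw [← hstein]
    exact hasDerivAt_mgf (by simp [integrableExpSet, hX])
  have hkernel (s : ℝ) : ∫ ω, τ ω * Real.exp (s * X ω) ∂μ ≤ c * mgf X μ s := by
    rw [mgf, ← integral_const_mul]
    refine integral_mono_of_nonneg ?_ ((hX s).const_mul _) ?_ <;>
      filter_upwards [hτ] with ω hω
    · exact mul_nonneg hω.1 (Real.exp_pos _).le
    · exact mul_le_mul_of_nonneg_right hω.2 (Real.exp_pos _).le
  have hquot (s : ℝ) := (hderiv s).mul (((hasDerivAt_pow 2 s).const_mul (-c / 2 : ℝ)).exp)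
  have hanti : AntitoneOn (fun s ↦ mgf X μ s * Real.exp (-c / 2 * s ^ 2)) (Set.Ici 0) := by
    refine antitoneOn_of_hasDerivWithinAt_nonpos (convex_Ici 0)
      (fun s _ ↦ (hquot s).continuousAt.continuousWithinAt)
      (fun s _ ↦ (hquot s).hasDerivWithinAt) fun s hs ↦ ?_
    have hs : 0 ≤ s := interior_subset hs
    have := mul_nonneg (mul_nonneg hs (Real.exp_pos (-c / 2 * s ^ 2)).le) (sub_nonneg.2 (hkernel s))
    linear_combination this
  have hle : mgf X μ l * Real.exp (-c / 2 * l ^ 2) ≤ 1 := by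
    simpa using hanti (Set.mem_Ici.2 le_rfl) hl hl
  rwa [← le_div_iff₀ (Real.exp_pos _), one_div, ← Real.exp_neg,
    show -(-c / 2 * l ^ 2) = c * l ^ 2 / 2 by ring] at hle

theorem hasSubgaussianMGF_of_stein (hX : ∀ l : ℝ, Integrable (fun ω ↦ Real.exp (l * X ω)) μ)
    (hτ : ∀ᵐ ω ∂μ, τ ω ∈ Set.Icc 0 (c : ℝ))
    (hstein : ∀ l : ℝ, ∫ ω, X ω * Real.exp (l * X ω) ∂μ = l * ∫ ω, τ ω * Real.exp (l * X ω) ∂μ) :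
    HasSubgaussianMGF X c μ := by
  refine ⟨hX, fun l ↦ ?_⟩
  obtain hl | hl := le_total 0 l
  · exact mgf_le_exp_of_stein hX hτ hstein hl
  · have hneg : mgf (-X) μ (-l) ≤ Real.exp (c * (-l) ^ 2 / 2) := by
      refine mgf_le_exp_of_stein (fun s ↦ ?_) hτ (fun s ↦ ?_) (neg_nonneg.2 hl)
      · simpa using hX (-s)
      · simpa [integral_neg] using congrArg Neg.neg (hstein (-s))
    simpa [mgf_neg] using hneg

end Subgaussian

section LinearAlgebra

variable {𝕜 E : Type*} [RCLike 𝕜] [NormedAddCommGroup E] [InnerProductSpace 𝕜 E]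

lemma rankOne_sub_rankOne_mem_skewAdjoint [CompleteSpace E] (u v : E) :
    rankOne 𝕜 u v - rankOne 𝕜 v u ∈ skewAdjoint (E →L[𝕜] E) := by
  simp [skewAdjoint.mem_iff, ContinuousLinearMap.star_eq_adjoint]

lemma trace_starProjection [FiniteDimensional 𝕜 E] (K : Submodule 𝕜 E) :
    LinearMap.trace 𝕜 E K.starProjection = finrank 𝕜 K :=
  LinearMap.IsProj.trace ⟨K.starProjection_apply_mem, fun _ ↦ K.starProjection_eq_self_iff.2⟩

variable (K : Submodule 𝕜 E) [K.HasOrthogonalProjection]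

lemma inner_starProjection_starProjection (x y : E) :
    ⟪K.starProjection x, K.starProjection y⟫_𝕜 = ⟪K.starProjection x, y⟫_𝕜 := by
  rw [← K.inner_starProjection_left_eq_right,
    K.starProjection_eq_self_iff.2 (K.starProjection_apply_mem x)]

lemma inner_self_starProjection (x : E) :
    ⟪x, K.starProjection x⟫_𝕜 = (‖K.starProjection x‖ : 𝕜) ^ 2 := by
  rw [← inner_self_eq_norm_sq_to_K, inner_starProjection_starProjection,
    K.inner_starProjection_left_eq_right]

end LinearAlgebra

variable {E : Type*} [NormedAddCommGroup E] [InnerProductSpace ℝ E]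

lemma preimage_smul_sphere_inter (R : E ≃ₗᵢ[ℝ] E) (I : Set ℝ) (A : Set E) :
    R ⁻¹' (I • (Metric.sphere 0 1 ∩ A)) = I • (Metric.sphere 0 1 ∩ R ⁻¹' A) := by
  ext x
  constructor
  · rintro ⟨c, hc, z, ⟨hz, hzA⟩, hx⟩
    exact ⟨c, hc, R.symm z, ⟨by simpa using hz, by simpa using hzA⟩,
      R.injective (by simpa using hx)⟩
  · rintro ⟨c, hc, z, ⟨hz, hzA⟩, rfl⟩
    exact ⟨c, hc, R z, ⟨by simpa using hz, hzA⟩, by simp⟩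

lemma fderiv_comp_norm_sq_starProjection_smul (K : Submodule ℝ E) [K.HasOrthogonalProjection]
    {φ : ℝ → ℝ} (hφ : Differentiable ℝ φ) (x : E) :
    fderiv ℝ (fun y ↦ φ (‖K.starProjection y‖ ^ 2) • K.starProjection y) x =
      φ (‖K.starProjection x‖ ^ 2) • K.starProjection +
        (2 * deriv φ (‖K.starProjection x‖ ^ 2)) •
          rankOne ℝ (K.starProjection x) (K.starProjection x) := by
  have hcomp := (hφ (‖K.starProjection x‖ ^ 2)).hasDerivAt
    |>.comp_hasFDerivAt x K.starProjection.hasFDerivAt.norm_sq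
  refine (hcomp.fun_smul K.starProjection.hasFDerivAt).fderiv.trans ?_
  ext v
  simp only [Function.comp_apply, add_apply, smul_apply, ContinuousLinearMap.smulRight_apply,
    ContinuousLinearMap.comp_apply, coe_innerSL_apply, inner_starProjection_starProjection,
    rankOne_apply]
  module

lemma fderiv_inner_smul_rankOne_sub_rankOne {F : Type*} [NormedAddCommGroup F] [NormedSpace ℝ F]
    {u : E} (hu : ‖u‖ = 1) (a : E) {f : E → F} {x : E} (hf : DifferentiableAt ℝ f x) :
    fderiv ℝ (fun y ↦ ⟪u, y⟫ • f y) x ((rankOne ℝ u a - rankOne ℝ a u) x) =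
      (⟪a, x⟫ - ⟪a, u⟫ * ⟪u, x⟫) • f x +
        (⟪a, x⟫ • fderiv ℝ f x (⟪u, x⟫ • u) - ⟪u, x⟫ ^ 2 • fderiv ℝ f x a) := by
  have hinner : HasFDerivAt (fun y ↦ ⟪u, y⟫) (innerSL ℝ u) x := (innerSL ℝ u).hasFDerivAt
  rw [(hinner.fun_smul hf.hasFDerivAt).fderiv]
  simp only [sub_apply, add_apply, smul_apply, rankOne_apply, map_sub, map_smul,
    ContinuousLinearMap.smulRight_apply, coe_innerSL_apply, real_inner_self_eq_norm_sq, hu,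
    real_inner_comm a]
  module

variable [MeasurableSpace E]

/-- The measure `μ` is concentrated on the unit sphere and invariant under all linear isometries:
up to scaling, `μ` is the uniform measure on the sphere. It is kept as a measure on the ambient
space, where functions on the sphere can be differentiated. -/
structure IsInvariantOnUnitSphere (μ : Measure E) : Prop where
  ae_norm_eq_one : ∀ᵐ x ∂μ, ‖x‖ = 1
  measurePreserving (R : E ≃ₗᵢ[ℝ] E) : MeasurePreserving R μ μ

namespace IsInvariantOnUnitSphere

variable {μ : Measure E}

lemma smul (hμ : IsInvariantOnUnitSphere μ) (c : ℝ≥0∞) : IsInvariantOnUnitSphere (c • μ) where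
  ae_norm_eq_one := Measure.ae_smul_measure hμ.ae_norm_eq_one c
  measurePreserving R := (hμ.measurePreserving R).smul_measure c

lemma nontrivial [NeZero μ] (hμ : IsInvariantOnUnitSphere μ) : Nontrivial E := by
  obtain ⟨x, hx⟩ := hμ.ae_norm_eq_one.exists
  exact nontrivial_of_ne x 0 (norm_ne_zero_iff.1 (hx ▸ one_ne_zero))

variable [BorelSpace E] [FiniteDimensional ℝ E] [IsFiniteMeasure μ]
  {F : Type*} [NormedAddCommGroup F]

lemma integrable_of_continuous (hμ : IsInvariantOnUnitSphere μ) {f : E → F} (hf : Continuous f) :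
    Integrable f μ := by
  obtain ⟨C, hC⟩ := (isCompact_sphere (0 : E) 1).exists_bound_of_continuousOn hf.continuousOn
  refine .of_bound hf.aestronglyMeasurable C ?_
  filter_upwards [hμ.ae_norm_eq_one] with x hx using hC x (by simpa using hx)

variable [NormedSpace ℝ F]

theorem integral_fderiv_skewAdjoint (hμ : IsInvariantOnUnitSphere μ) {A : E →L[ℝ] E}
    (hA : A ∈ skewAdjoint (E →L[ℝ] E)) {f : E → F} (hf : ContDiff ℝ 1 f) :
    ∫ x, fderiv ℝ f x (A x) ∂μ = 0 := by
  -- `∫ f (exp (t A) x) ∂μ` does not depend on `t`; differentiate it at `t = 0`.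
  let _ : NormedAlgebra ℚ (E →L[ℝ] E) := .restrictScalars ℚ ℝ _
  let R (t : ℝ) : E ≃ₗᵢ[ℝ] E := Unitary.linearIsometryEquiv
    ⟨_, NormedSpace.exp_mem_unitary_of_mem_skewAdjoint (skewAdjoint.smul_mem t hA)⟩
  have hR (t : ℝ) (x : E) : R t x = NormedSpace.exp (t • A) x := rfl
  have hinv (t : ℝ) : ∫ x, f (R t x) ∂μ = ∫ x, f x ∂μ :=
    (hμ.measurePreserving (R t)).integral_comp (R t).toHomeomorph.measurableEmbedding f
  have hderiv (x : E) (t : ℝ) :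
      HasDerivAt (fun s ↦ f (R s x)) (fderiv ℝ f (R t x) (A (R t x))) t :=
    (hf.differentiable one_ne_zero _).hasFDerivAt.comp_hasDerivAt t
      ((hasDerivAt_exp_smul_const' A t).clm_apply (hasDerivAt_const t x) |>.congr_deriv
        (by simp [hR]))
  have hcont : Continuous fun x ↦ fderiv ℝ f x (A x) :=
    (hf.continuous_fderiv one_ne_zero).clm_apply A.continuous
  obtain ⟨C, hC⟩ := (isCompact_sphere (0 : E) 1).exists_bound_of_continuousOn hcont.continuousOn
  have hflow := (hasDerivAt_integral_of_dominated_loc_of_deriv_le (μ := μ) (x₀ := (0 : ℝ))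
    (F := fun t x ↦ f (R t x)) (F' := fun t x ↦ fderiv ℝ f (R t x) (A (R t x)))
    (bound := fun _ ↦ C) Filter.univ_mem
    (.of_forall fun t ↦ (hf.continuous.comp (R t).continuous).aestronglyMeasurable)
    (hμ.integrable_of_continuous (hf.continuous.comp (R 0).continuous))
    (hcont.comp (R 0).continuous).aestronglyMeasurable
    (by filter_upwards [hμ.ae_norm_eq_one] with x hx t _ using hC _ (by simpa using hx))
    (integrable_const C) (.of_forall fun x t _ ↦ hderiv x t)).2
  simp only [hinv] at hflow
  simpa [hR] using hflow.unique (hasDerivAt_const 0 _)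

theorem integral_fderiv_apply (hμ : IsInvariantOnUnitSphere μ) (a : E) {f : E → F}
    (hf : ContDiff ℝ 1 f) :
    ∫ x, fderiv ℝ f x a ∂μ =
      ∫ x, ⟪a, x⟫ • ((finrank ℝ E - 1 : ℝ) • f x + fderiv ℝ f x x) ∂μ := by
  have := hf.continuous_fderiv one_ne_zero
  let e := stdOrthonormalBasis ℝ E
  let A i := rankOne ℝ (e i) a - rankOne ℝ a (e i)
  have hderiv (i) (x : E) : fderiv ℝ (fun y ↦ ⟪e i, y⟫ • f y) x (A i x) =
      (⟪a, x⟫ - ⟪a, e i⟫ * ⟪e i, x⟫) • f x +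
        (⟪a, x⟫ • fderiv ℝ f x (⟪e i, x⟫ • e i) - ⟪e i, x⟫ ^ 2 • fderiv ℝ f x a) :=
    fderiv_inner_smul_rankOne_sub_rankOne (e.norm_eq_one i) a (hf.differentiable one_ne_zero x)
  have hcont (i) : Continuous fun x ↦ fderiv ℝ (fun y ↦ ⟪e i, y⟫ • f y) x (A i x) := by
    simp only [hderiv]
    fun_prop
  have hsum (x : E) (hx : ‖x‖ = 1) : ∑ i, fderiv ℝ (fun y ↦ ⟪e i, y⟫ • f y) x (A i x) =
      ⟪a, x⟫ • ((finrank ℝ E - 1 : ℝ) • f x + fderiv ℝ f x x) - fderiv ℝ f x a := by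
    simp_rw [hderiv, Finset.sum_add_distrib, Finset.sum_sub_distrib, ← Finset.sum_smul,
      ← Finset.smul_sum, Finset.sum_sub_distrib, ← map_sum, e.sum_inner_mul_inner, e.sum_repr',
      e.sum_sq_inner_right, hx]
    simp only [Finset.sum_const, Finset.card_univ, Fintype.card_fin]
    module
  have hzero : ∫ x, ∑ i, fderiv ℝ (fun y ↦ ⟪e i, y⟫ • f y) x (A i x) ∂μ = 0 := by
    rw [integral_finsetSum _ fun i _ ↦ hμ.integrable_of_continuous (hcont i)]
    exact Finset.sum_eq_zero fun i _ ↦ hμ.integral_fderiv_skewAdjoint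
      (rankOne_sub_rankOne_mem_skewAdjoint _ _) ((contDiff_const.inner ℝ contDiff_id).smul hf)
  rw [eq_comm, ← sub_eq_zero, ← integral_sub (hμ.integrable_of_continuous (by fun_prop))
    (hμ.integrable_of_continuous (by fun_prop)), ← hzero]
  refine integral_congr_ae ?_
  filter_upwards [hμ.ae_norm_eq_one] with x hx using (hsum x hx).symm

theorem integral_trace_fderiv (hμ : IsInvariantOnUnitSphere μ) {V : E → E} (hV : ContDiff ℝ 1 V) :
    ∫ x, LinearMap.trace ℝ E (fderiv ℝ V x) ∂μ =
      ∫ x, ((finrank ℝ E - 1) * ⟪x, V x⟫ + ⟪x, fderiv ℝ V x x⟫) ∂μ := by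
  have := hV.continuous_fderiv one_ne_zero
  let e := stdOrthonormalBasis ℝ E
  calc ∫ x, LinearMap.trace ℝ E (fderiv ℝ V x) ∂μ
      = ∑ i, ⟪e i, ∫ x, fderiv ℝ V x (e i) ∂μ⟫ := by
        simp_rw [LinearMap.trace_eq_sum_inner _ e, ContinuousLinearMap.coe_coe]
        rw [integral_finsetSum _ fun i _ ↦ hμ.integrable_of_continuous (by fun_prop)]
        exact Finset.sum_congr rfl fun i _ ↦
          integral_inner (hμ.integrable_of_continuous (by fun_prop)) _
    _ = ∑ i, ∫ x, ⟪x, e i⟫ * ⟪e i, (finrank ℝ E - 1 : ℝ) • V x + fderiv ℝ V x x⟫ ∂μ := by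
        refine Finset.sum_congr rfl fun i _ ↦ ?_
        rw [hμ.integral_fderiv_apply _ hV,
          ← integral_inner (hμ.integrable_of_continuous (by fun_prop))]
        simp_rw [real_inner_smul_right, real_inner_comm (e i)]
    _ = ∫ x, ((finrank ℝ E - 1) * ⟪x, V x⟫ + ⟪x, fderiv ℝ V x x⟫) ∂μ := by
        rw [← integral_finsetSum _ fun i _ ↦ hμ.integrable_of_continuous (by fun_prop)]
        simp_rw [e.sum_inner_mul_inner, inner_add_right, real_inner_smul_right]

theorem stein_identity_norm_sq_starProjection (hμ : IsInvariantOnUnitSphere μ)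
    (K : Submodule ℝ E) {φ : ℝ → ℝ} (hφ : ContDiff ℝ 1 φ) :
    ∫ x, (finrank ℝ E * ‖K.starProjection x‖ ^ 2 - finrank ℝ K) *
        φ (‖K.starProjection x‖ ^ 2) ∂μ =
      ∫ x, 2 * (‖K.starProjection x‖ ^ 2 * (1 - ‖K.starProjection x‖ ^ 2)) *
        deriv φ (‖K.starProjection x‖ ^ 2) ∂μ := by
  have := hφ.continuous_deriv_one
  let V (x : E) : E := φ (‖K.starProjection x‖ ^ 2) • K.starProjection x
  have hV : ContDiff ℝ 1 V :=
    (hφ.comp (K.starProjection.contDiff.norm_sq ℝ)).smul K.starProjection.contDiff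
  have hfderiv := fderiv_comp_norm_sq_starProjection_smul K (hφ.differentiable one_ne_zero)
  have hinner (x : E) : ⟪x, K.starProjection x⟫ = ‖K.starProjection x‖ ^ 2 :=
    inner_self_starProjection K x
  have hV_inner (x : E) :
      ⟪x, V x⟫ = φ (‖K.starProjection x‖ ^ 2) * ‖K.starProjection x‖ ^ 2 := by
    rw [real_inner_smul_right, hinner]
  have hV_fderiv (x : E) : ⟪x, fderiv ℝ V x x⟫ =
      φ (‖K.starProjection x‖ ^ 2) * ‖K.starProjection x‖ ^ 2 +
        2 * deriv φ (‖K.starProjection x‖ ^ 2) * (‖K.starProjection x‖ ^ 2) ^ 2 := by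
    simp only [V, hfderiv, add_apply, smul_apply, rankOne_apply, inner_add_right,
      real_inner_smul_right, real_inner_comm x, hinner]
    ring
  have hV_trace (x : E) : LinearMap.trace ℝ E (fderiv ℝ V x) =
      φ (‖K.starProjection x‖ ^ 2) * finrank ℝ K +
        2 * deriv φ (‖K.starProjection x‖ ^ 2) * ‖K.starProjection x‖ ^ 2 := by
    simp [V, hfderiv, trace_starProjection, trace_rankOne]
  have hdiv := hμ.integral_trace_fderiv hV
  simp_rw [hV_trace, hV_inner, hV_fderiv] at hdiv
  rw [eq_comm, ← sub_eq_zero, ← integral_sub (hμ.integrable_of_continuous (by fun_prop))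
    (hμ.integrable_of_continuous (by fun_prop))] at hdiv
  rw [← sub_eq_zero, ← integral_sub (hμ.integrable_of_continuous (by fun_prop))
    (hμ.integrable_of_continuous (by fun_prop)), ← hdiv]
  congr with x
  ring

lemma integral_norm_sq_starProjection_sub_mul_exp [Nontrivial E] (hμ : IsInvariantOnUnitSphere μ)
    (K : Submodule ℝ E) (l : ℝ) {m : ℝ} (hm : m = finrank ℝ K / finrank ℝ E) :
    ∫ x, (‖K.starProjection x‖ ^ 2 - m) * Real.exp (l * (‖K.starProjection x‖ ^ 2 - m)) ∂μ =
      l * ∫ x, 2 / finrank ℝ E * (‖K.starProjection x‖ ^ 2 * (1 - ‖K.starProjection x‖ ^ 2)) *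
        Real.exp (l * (‖K.starProjection x‖ ^ 2 - m)) ∂μ := by
  have hE : (finrank ℝ E : ℝ) ≠ 0 := Nat.cast_ne_zero.2 finrank_pos.ne'
  have hexp (s : ℝ) :
      deriv (fun s ↦ Real.exp (l * (s - m))) s = l * Real.exp (l * (s - m)) := by
    simpa [mul_comm] using (((hasDerivAt_id s).sub_const m).const_mul l).exp.deriv
  have hstein := hμ.stein_identity_norm_sq_starProjection K
    (φ := fun s ↦ Real.exp (l * (s - m))) (by fun_prop)
  simp_rw [hexp] at hstein
  calc ∫ x, (‖K.starProjection x‖ ^ 2 - m) * Real.exp (l * (‖K.starProjection x‖ ^ 2 - m)) ∂μ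
      = (finrank ℝ E : ℝ)⁻¹ * ∫ x, (finrank ℝ E * ‖K.starProjection x‖ ^ 2 - finrank ℝ K) *
          Real.exp (l * (‖K.starProjection x‖ ^ 2 - m)) ∂μ := by
        rw [← integral_const_mul, ← (eq_div_iff hE).1 hm]
        congr with x
        field_simp
    _ = l * ∫ x, 2 / finrank ℝ E *
          (‖K.starProjection x‖ ^ 2 * (1 - ‖K.starProjection x‖ ^ 2)) *
          Real.exp (l * (‖K.starProjection x‖ ^ 2 - m)) ∂μ := by
        rw [hstein, ← integral_const_mul, ← integral_const_mul]
        congr with x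
        ring

end IsInvariantOnUnitSphere

variable [BorelSpace E]

theorem IsInvariantOnUnitSphere.hasSubgaussianMGF_norm_sq_starProjection [FiniteDimensional ℝ E]
    {μ : Measure E} [IsProbabilityMeasure μ] (hμ : IsInvariantOnUnitSphere μ) (K : Submodule ℝ E) :
    HasSubgaussianMGF (fun x ↦ ‖K.starProjection x‖ ^ 2 - (finrank ℝ K : ℝ) / finrank ℝ E)
      (1 / (2 * finrank ℝ E)) μ := by
  have := hμ.nontrivial
  refine hasSubgaussianMGF_of_stein (fun l ↦ hμ.integrable_of_continuous (by fun_prop)) ?_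
    fun l ↦ hμ.integral_norm_sq_starProjection_sub_mul_exp K l rfl
  filter_upwards [hμ.ae_norm_eq_one] with x hx
  have hle : ‖K.starProjection x‖ ^ 2 ≤ 1 :=
    pow_le_one₀ (norm_nonneg _) (hx ▸ K.norm_starProjection_apply_le x)
  have hE : (0 : ℝ) < finrank ℝ E := Nat.cast_pos.2 finrank_pos
  refine ⟨mul_nonneg (by positivity) (mul_nonneg (sq_nonneg _) (sub_nonneg.2 hle)), ?_⟩
  push_cast
  field_simp
  nlinarith [sq_nonneg (2 * ‖K.starProjection x‖ ^ 2 - 1)]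

lemma map_coe_toSphere_apply (ν : Measure E) {A : Set E} (hA : MeasurableSet A) :
    ν.toSphere.map Subtype.val A =
      finrank ℝ E * ν (Set.Ioo (0 : ℝ) 1 • (Metric.sphere 0 1 ∩ A)) := by
  rw [Measure.map_apply measurable_subtype_coe hA,
    ν.toSphere_apply' (measurable_subtype_coe hA), Subtype.image_preimage_coe]

lemma isInvariantOnUnitSphere_map_coe_toSphere {ν : Measure E}
    (hν : ∀ R : E ≃ₗᵢ[ℝ] E, MeasurePreserving R ν ν) :
    IsInvariantOnUnitSphere (ν.toSphere.map Subtype.val) where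
  ae_norm_eq_one := by
    rw [ae_map_iff (by fun_prop) (measurableSet_eq_fun (by fun_prop) (by fun_prop))]
    exact .of_forall fun x ↦ by simp
  measurePreserving R := by
    have hR : Measurable R := R.continuous.measurable
    refine ⟨hR, Measure.ext fun A hA ↦ ?_⟩
    rw [Measure.map_apply hR hA, map_coe_toSphere_apply _ hA, map_coe_toSphere_apply _ (hR hA),
      ← preimage_smul_sphere_inter,
      (hν R).measure_preimage_emb R.toHomeomorph.measurableEmbedding]

lemma isInvariantOnUnitSphere_sphereUniform (d : ℕ) :
    IsInvariantOnUnitSphere (sphereUniform d) := by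
  rw [sphereUniform, Measure.map_smul]
  exact (isInvariantOnUnitSphere_map_coe_toSphere fun R ↦ R.measurePreserving).smul _

instance isProbabilityMeasure_sphereUniform (d : ℕ) [NeZero d] :
    IsProbabilityMeasure (sphereUniform d) := by
  have : NeZero (volume : Measure (EuclideanSpace ℝ (Fin d))).toSphere :=
    ⟨Measure.toSphere_ne_zero _⟩
  exact Measure.isProbabilityMeasure_map (by fun_prop)

/-- Concentration for the squared norm of the projection of a uniformly random unit vector
onto a subspace of dimension `r`: two-sided sub-Gaussian tails around `r/d`. -/
theorem projection_norm_concentration (d r : ℕ) (hd : 1 ≤ d)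
    (P : EuclideanSpace ℝ (Fin d) →ₗ[ℝ] EuclideanSpace ℝ (Fin d))
    (hidem : ∀ x, P (P x) = P x)
    (hsa : ∀ x y, ⟪P x, y⟫ = ⟪x, P y⟫)
    (hrank : Module.finrank ℝ (LinearMap.range P) = r)
    (t : ℝ) (ht : 0 < t) :
    sphereUniform d {x | t ≤ ‖P x‖ ^ 2 - (r : ℝ) / d}
        ≤ ENNReal.ofReal (Real.exp (-((d : ℝ) * t ^ 2))) ∧
      sphereUniform d {x | ‖P x‖ ^ 2 - (r : ℝ) / d ≤ -t}
        ≤ ENNReal.ofReal (Real.exp (-((d : ℝ) * t ^ 2))) := by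
  have : NeZero d := ⟨by lia⟩
  have hP : P.IsSymmetricProjection := ⟨LinearMap.ext hidem, hsa⟩
  obtain ⟨_, hPK⟩ := LinearMap.isSymmetricProjection_iff_eq_coe_starProjection_range.1 hP
  have hsub : HasSubgaussianMGF (fun x ↦ ‖P x‖ ^ 2 - (r : ℝ) / d) (1 / (2 * d))
      (sphereUniform d) := by
    have hPx (x) : (LinearMap.range P).starProjection x = P x :=
      (LinearMap.congr_fun hPK x).symm
    simpa [hPx, hrank] using (isInvariantOnUnitSphere_sphereUniform d)
      |>.hasSubgaussianMGF_norm_sq_starProjection (LinearMap.range P)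
  have hexp : -t ^ 2 / (2 * ((1 / (2 * d) : ℝ≥0) : ℝ)) = -(d * t ^ 2) := by
    push_cast
    field_simp
  rw [← hexp]
  constructor
  · exact measure_ge_le_ofReal_exp_of_hasSubgaussianMGF hsub ht.le
  · simpa only [Pi.neg_apply, le_neg (a := t)] using
      measure_ge_le_ofReal_exp_of_hasSubgaussianMGF hsub.neg ht.le
end

section
/- Let d ≥ 2, let P : ℝ^d → ℝ^d be an orthogonal projection of rank r with 1 ≤ r < d, let x be a random vector distributed according to σ_{d−1}, and let 0 < t < 1 − r/d. Then ℙ(‖P x‖² − r/d ≥ t) ≤ exp(−(d/2) · D_KL(r/d ‖ r/d + t)), where D_KL(p ‖ q) = p·log(p/q) + (1−p)·log((1−p)/(1−q)) is the Kullback–Leibler divergence between Bernoulli distributions with parameters p and q. -/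
open MeasureTheory
open scoped RealInnerProductSpace

/-- The Kullback–Leibler divergence between Bernoulli distributions of parameters
`p` and `q`. -/
noncomputable def klBernoulli (p q : ℝ) : ℝ :=
  p * Real.log (p / q) + (1 - p) * Real.log ((1 - p) / (1 - q))

/-!
Let `P` have rank `r`, put `p = r / d` and `q = p + t`, and let `T` scale the range of `P` by
`a = √(p / q)` and its kernel by `b = √((1 - p) / (1 - q))`. Since `a ≤ b`, the quantity
`‖T x‖² = a² ‖P x‖² + b² (1 - ‖P x‖²)` is nonincreasing in `‖P x‖²` and equals `1` at
`‖P x‖² = q`. Hence `T` maps the cone `{c • x | 0 < c < 1}` over the cap `{x | q ≤ ‖P x‖²}` of the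
unit sphere into the unit ball, and comparing volumes bounds the measure of the cap by
`(det T)⁻¹ = (a ^ r * b ^ (d - r))⁻¹`, which is `exp (-(d / 2) * klBernoulli p q)`.
-/

section Scaling

open LinearMap

theorem det_smul_add_smul_one_sub {𝕜 V : Type*} [Field 𝕜] [AddCommGroup V] [Module 𝕜 V]
    [FiniteDimensional 𝕜 V] {P : Module.End 𝕜 V} (hP : IsIdempotentElem P) (a b : 𝕜) :
    LinearMap.det (a • P + b • (1 - P)) =
      a ^ Module.finrank 𝕜 (range P) * b ^ Module.finrank 𝕜 (ker P) := by
  set e := (range P).prodEquivOfIsCompl (ker P) hP.isCompl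
  have conj_prodMap :
      a • P + b • (1 - P) = e.conj ((a • LinearMap.id).prodMap (b • LinearMap.id)) := by
    have conj_P : P = e.conj (prodMap LinearMap.id 0) := hP.isProj_range.eq_conj_prodMap
    have one_eq_conj : (1 : Module.End 𝕜 V) = e.conj 1 := e.conj_id.symm
    nth_rw 1 2 [conj_P]
    rw [one_eq_conj, ← map_sub, ← map_smul, ← map_smul, ← map_add]
    congr 1
    ext <;> simp
  rw [conj_prodMap, LinearEquiv.conj_apply, comp_assoc, det_conj, det_prodMap, det_smul, det_smul,
    det_id, det_id, mul_one, mul_one]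

theorem norm_sq_smul_add_smul_one_sub {𝕜 E : Type*} [RCLike 𝕜] [SeminormedAddCommGroup E]
    [InnerProductSpace 𝕜 E] {P : E →ₗ[𝕜] E} (hP : P.IsSymmetricProjection) (a b : 𝕜) (x : E) :
    ‖(a • P + b • (1 - P) : Module.End 𝕜 E) x‖ ^ 2 =
      ‖a‖ ^ 2 * ‖P x‖ ^ 2 + ‖b‖ ^ 2 * (‖x‖ ^ 2 - ‖P x‖ ^ 2) := by
  have apply_apply (y : E) : P (P y) = P y := LinearMap.congr_fun hP.isIdempotentElem y
  have inner_eq_zero : inner 𝕜 (P x) (x - P x) = 0 := by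
    rw [hP.isSymmetric, map_sub, apply_apply, sub_self, inner_zero_right]
  have pythagoras : ‖x‖ ^ 2 = ‖P x‖ ^ 2 + ‖x - P x‖ ^ 2 := by
    simpa [sq] using norm_add_sq_eq_norm_sq_add_norm_sq_of_inner_eq_zero _ _ inner_eq_zero
  have orth : inner 𝕜 (a • P x) (b • (x - P x)) = 0 := by
    rw [inner_smul_left, inner_smul_right, inner_eq_zero, mul_zero, mul_zero]
  have scaled : ‖a • P x + b • (x - P x)‖ ^ 2 = ‖a • P x‖ ^ 2 + ‖b • (x - P x)‖ ^ 2 := by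
    simpa [sq] using norm_add_sq_eq_norm_sq_add_norm_sq_of_inner_eq_zero _ _ orth
  rw [pythagoras, add_sub_cancel_left, ← mul_pow, ← mul_pow, ← norm_smul, ← norm_smul]
  exact scaled

end Scaling

theorem sqrt_pow_eq_exp {x : ℝ} {n : ℕ} (h : n ≠ 0 → 0 < x) :
    √x ^ n = Real.exp (n / 2 * Real.log x) := by
  rcases eq_or_ne n 0 with rfl | hn
  · simp
  · rw [← Real.exp_log (Real.sqrt_pos.2 (h hn)), ← Real.exp_nat_mul, Real.log_sqrt (h hn).le]
    ring_nf

theorem sqrt_pow_mul_sqrt_pow_eq_exp_klBernoulli {m k : ℕ} {p q : ℝ} (hp : (m + k) * p = m)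
    (hq0 : 0 < q) (hq1 : q < 1) :
    √(p / q) ^ m * √((1 - p) / (1 - q)) ^ k = Real.exp ((m + k) / 2 * klBernoulli p q) := by
  have hp' : (m + k) * (1 - p) = k := by linear_combination -hp
  have pos_left (hm : m ≠ 0) : 0 < p / q := by
    have : 0 < (m + k) * p := by rw [hp]; positivity
    exact div_pos (pos_of_mul_pos_right this (by positivity)) hq0
  have pos_right (hk : k ≠ 0) : 0 < (1 - p) / (1 - q) := by
    have : 0 < (m + k) * (1 - p) := by rw [hp']; positivity
    exact div_pos (pos_of_mul_pos_right this (by positivity)) (sub_pos.2 hq1)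
  rw [sqrt_pow_eq_exp pos_left, sqrt_pow_eq_exp pos_right, ← Real.exp_add, klBernoulli]
  congr 1
  linear_combination (-Real.log (p / q) / 2) * hp - (Real.log ((1 - p) / (1 - q)) / 2) * hp'

section Sphere

variable {E : Type*} [NormedAddCommGroup E] [MeasurableSpace E] [BorelSpace E]

open Metric Pointwise in
theorem ofReal_abs_det_mul_toSphere_le [NormedSpace ℝ E] [FiniteDimensional ℝ E] (μ : Measure E)
    [μ.IsAddHaarMeasure] {T : E →ₗ[ℝ] E} {s : Set (sphere (0 : E) 1)} (hs : MeasurableSet s)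
    (hT : ∀ x ∈ s, ‖T x‖ ≤ 1) :
    ENNReal.ofReal |LinearMap.det T| * μ.toSphere s ≤ μ.toSphere Set.univ := by
  have image_cone_subset_ball : T '' (Set.Ioo (0 : ℝ) 1 • ((↑) '' s)) ⊆ ball 0 1 := by
    rintro _ ⟨_, ⟨c, ⟨hc0, hc1⟩, _, ⟨x, hx, rfl⟩, rfl⟩, rfl⟩
    rw [mem_ball_zero_iff, map_smul, norm_smul, Real.norm_of_nonneg hc0.le]
    exact mul_lt_one_of_nonneg_of_lt_one_left hc0.le hc1 (hT x hx)
  rw [μ.toSphere_apply' hs, μ.toSphere_apply_univ, mul_left_comm, ← μ.addHaar_image_linearMap]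
  gcongr

theorem ofReal_mul_toSphere_setOf_le_norm_sq_le [InnerProductSpace ℝ E] [FiniteDimensional ℝ E]
    (μ : Measure E) [μ.IsAddHaarMeasure] {P : E →ₗ[ℝ] E} (hP : P.IsSymmetricProjection)
    {a b q : ℝ} (ha : 0 ≤ a) (hab : a ≤ b) (hq : a ^ 2 * q + b ^ 2 * (1 - q) ≤ 1) :
    ENNReal.ofReal (a ^ Module.finrank ℝ (LinearMap.range P) *
        b ^ Module.finrank ℝ (LinearMap.ker P)) *
      μ.toSphere {x | q ≤ ‖P x‖ ^ 2} ≤ μ.toSphere Set.univ := by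
  have continuous_P : Continuous P := P.continuous_of_finiteDimensional
  have measurableSet_cap :
      MeasurableSet {x : Metric.sphere (0 : E) 1 | q ≤ ‖P x‖ ^ 2} :=
    (isClosed_le continuous_const (by fun_prop)).measurableSet
  rw [← abs_of_nonneg (mul_nonneg (pow_nonneg ha _) (pow_nonneg (ha.trans hab) _)),
    ← det_smul_add_smul_one_sub hP.isIdempotentElem]
  refine ofReal_abs_det_mul_toSphere_le μ measurableSet_cap fun x (hx : q ≤ ‖P x‖ ^ 2) ↦ ?_
  rw [← sq_le_one_iff₀ (norm_nonneg _)]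
  calc
    _ = a ^ 2 * ‖P x‖ ^ 2 + b ^ 2 * (1 - ‖P x‖ ^ 2) := by
      rw [norm_sq_smul_add_smul_one_sub hP, norm_eq_of_mem_sphere, Real.norm_eq_abs,
        Real.norm_eq_abs, sq_abs, sq_abs, one_pow]
    _ = b ^ 2 - (b ^ 2 - a ^ 2) * ‖P x‖ ^ 2 := by ring
    _ ≤ b ^ 2 - (b ^ 2 - a ^ 2) * q := by
      have sq_le_sq : a ^ 2 ≤ b ^ 2 := by gcongr
      gcongr
    _ ≤ 1 := by linarith

theorem ofReal_exp_klBernoulli_mul_toSphere_setOf_le_norm_sq_le [InnerProductSpace ℝ E]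
    [FiniteDimensional ℝ E] [Nontrivial E] (μ : Measure E) [μ.IsAddHaarMeasure] {P : E →ₗ[ℝ] E}
    (hP : P.IsSymmetricProjection) {p q : ℝ}
    (hp : Module.finrank ℝ E * p = Module.finrank ℝ (LinearMap.range P)) (hq0 : 0 < q)
    (hpq : p ≤ q) (hq1 : q < 1) :
    ENNReal.ofReal (Real.exp (Module.finrank ℝ E / 2 * klBernoulli p q)) *
      μ.toSphere {x | q ≤ ‖P x‖ ^ 2} ≤ μ.toSphere Set.univ := by
  have finrank_E_pos : 0 < (Module.finrank ℝ E : ℝ) := by exact_mod_cast Module.finrank_pos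
  have hp0 : 0 ≤ p := nonneg_of_mul_nonneg_right (hp ▸ Nat.cast_nonneg _) finrank_E_pos
  have one_sub_q_pos : 0 < 1 - q := sub_pos.2 hq1
  have one_sub_p_nonneg : 0 ≤ 1 - p := sub_nonneg.2 (hpq.trans hq1.le)
  have rank_nullity : (Module.finrank ℝ E : ℝ) =
      Module.finrank ℝ (LinearMap.range P) + Module.finrank ℝ (LinearMap.ker P) := by
    exact_mod_cast P.finrank_range_add_finrank_ker.symm
  have scale_le : √(p / q) ≤ √((1 - p) / (1 - q)) := by
    apply Real.sqrt_le_sqrt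
    calc
      p / q ≤ 1 := div_le_one_of_le₀ hpq hq0.le
      _ ≤ (1 - p) / (1 - q) := (one_le_div one_sub_q_pos).2 (by gcongr)
  have scale_sq_sum : √(p / q) ^ 2 * q + √((1 - p) / (1 - q)) ^ 2 * (1 - q) = 1 := by
    rw [Real.sq_sqrt (by positivity), Real.sq_sqrt (by positivity), div_mul_cancel₀ _ hq0.ne',
      div_mul_cancel₀ _ one_sub_q_pos.ne', add_sub_cancel]
  rw [rank_nullity] at hp ⊢
  rw [← sqrt_pow_mul_sqrt_pow_eq_exp_klBernoulli hp hq0 hq1]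
  exact ofReal_mul_toSphere_setOf_le_norm_sq_le μ hP (Real.sqrt_nonneg _) scale_le scale_sq_sum.le

end Sphere

theorem projection_norm_kl_tail_general {E : Type*} [NormedAddCommGroup E]
    [InnerProductSpace ℝ E] [FiniteDimensional ℝ E] [Nontrivial E] [MeasurableSpace E]
    [BorelSpace E] (μ : Measure E) [μ.IsAddHaarMeasure] {d r : ℕ} (hd : Module.finrank ℝ E = d)
    {P : E →ₗ[ℝ] E} (hP : P.IsSymmetricProjection)
    (hr : Module.finrank ℝ (LinearMap.range P) = r) {t : ℝ} (ht : 0 < t)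
    (ht' : t < 1 - (r : ℝ) / d) :
    ((μ.toSphere Set.univ)⁻¹ • μ.toSphere) {x | t ≤ ‖P x‖ ^ 2 - (r : ℝ) / d}
      ≤ ENNReal.ofReal
          (Real.exp (-((d : ℝ) / 2) * klBernoulli ((r : ℝ) / d) ((r : ℝ) / d + t))) := by
  subst hd hr
  have finrank_E_pos : 0 < (Module.finrank ℝ E : ℝ) := by exact_mod_cast Module.finrank_pos
  have tail_le := ofReal_exp_klBernoulli_mul_toSphere_setOf_le_norm_sq_le μ hP
    (mul_div_cancel₀ _ finrank_E_pos.ne') (by positivity) (le_add_of_nonneg_right ht.le)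
    (lt_sub_iff_add_lt'.1 ht')
  rw [Measure.smul_apply, smul_eq_mul, mul_comm, ← div_eq_mul_inv, neg_mul, Real.exp_neg,
    ENNReal.ofReal_inv_of_pos (Real.exp_pos _)]
  refine ENNReal.div_le_of_le_mul ?_
  simp only [le_sub_iff_add_le']
  rwa [← ENNReal.mul_le_iff_le_inv (by simp [Real.exp_pos]) ENNReal.ofReal_ne_top]

/-- Chernoff-type upper tail for the squared norm of the projection of a uniformly random
unit vector onto a subspace of dimension `r`, expressed through the Kullback–Leibler
divergence of Bernoulli distributions. -/
theorem projection_norm_kl_tail (d r : ℕ) (hd : 2 ≤ d) (hr : 1 ≤ r) (hrd : r < d)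
    (P : EuclideanSpace ℝ (Fin d) →ₗ[ℝ] EuclideanSpace ℝ (Fin d))
    (hidem : ∀ x, P (P x) = P x)
    (hsa : ∀ x y, ⟪P x, y⟫ = ⟪x, P y⟫)
    (hrank : Module.finrank ℝ (LinearMap.range P) = r)
    (t : ℝ) (ht : 0 < t) (ht' : t < 1 - (r : ℝ) / d) :
    sphereUniform d {x | t ≤ ‖P x‖ ^ 2 - (r : ℝ) / d}
      ≤ ENNReal.ofReal
          (Real.exp (-((d : ℝ) / 2) * klBernoulli ((r : ℝ) / d) ((r : ℝ) / d + t))) := by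
  have : Nonempty (Fin d) := ⟨⟨0, by omega⟩⟩
  rw [sphereUniform,
    (MeasurableEmbedding.subtype_coe Metric.isClosed_sphere.measurableSet).map_apply]
  exact projection_norm_kl_tail_general volume finrank_euclideanSpace_fin
    ⟨LinearMap.ext hidem, hsa⟩ hrank ht ht'
end

section
/- Let d ≥ 4, let k be an integer with 0 ≤ k ≤ d/3 − 1, let x_1, …, x_k be orthonormal vectors in ℝ^d, and let x ∈ B_d(0,1). Let S = S^{d−1} ∩ {w ∈ ℝ^d : |⟨x_i, w⟩| ≤ d^{−3} for all i ≤ k} (a set of positive σ_{d−1}-measure), and let μ be the probability measure obtained by conditioning σ_{d−1} on S. Then for every t ≥ 2, μ({y : |⟨x, y⟩| ≥ √(t/d) + 1/d²}) ≤ 2 √t · e^{−t/3}. -/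
open MeasureTheory
open scoped RealInnerProductSpace

/-!
Let `K` be the span of the `k` given orthonormal vectors. Whether a unit vector lies in the slab set
depends only on its projection to `K`. Given the norm and that projection, a uniform vector in the
unit ball has a component in `Kᗮ` of fixed length and uniform direction, so conditioning on the slab
set leaves the tails of inner products with `Kᗮ` as they are on the sphere of `Kᗮ`. There a cap is
bounded through the volume of the cone over it, which lies in a ball of radius `exp (-s² / 2)`: this
gives the tail `2 exp (-(d - k) s² / 2)`. The `K`-component changes the inner product by at most
`√k` times the half-width of the slabs.
-/

open Metric Set Module

section Cone

/-- A set stable under multiplication by positive scalars, stated as an equivalence. Unlike a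
`ConvexCone`, it is not required to be convex. -/
def IsCone {E : Type*} [SMul ℝ E] (C : Set E) : Prop :=
  ∀ ⦃r : ℝ⦄, 0 < r → ∀ b, r • b ∈ C ↔ b ∈ C

theorem IsCone.univ {E : Type*} [SMul ℝ E] : IsCone (univ : Set E) :=
  fun _ _ _ => Iff.rfl

theorem IsCone.inter {E : Type*} [SMul ℝ E] {C D : Set E} (hC : IsCone C) (hD : IsCone D) :
    IsCone (C ∩ D) :=
  fun _ hr b => and_congr (hC hr b) (hD hr b)

theorem isCone_inv_norm_smul_map_mem {E F : Type*} [NormedAddCommGroup E] [NormedSpace ℝ E]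
    [AddCommGroup F] [Module ℝ F] (L : E →ₗ[ℝ] F) (T : Set F) :
    IsCone {w | ‖w‖⁻¹ • L w ∈ T} := by
  intro r hr w
  have hscale : ‖r • w‖⁻¹ • L (r • w) = ‖w‖⁻¹ • L w := by
    rw [norm_smul, Real.norm_of_nonneg hr.le, map_smul, smul_smul, mul_inv_rev,
      inv_mul_cancel_right₀ hr.ne']
  rw [mem_ofPred_eq, mem_ofPred_eq, hscale]

variable {E : Type*} [NormedAddCommGroup E] [InnerProductSpace ℝ E]

/-- The symmetric cone of vectors whose direction has inner product at least `s` in absolute value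
with `v`. Multiplying through by the norm avoids a division and puts `0` in the cone. -/
def doubleCone (v : E) (s : ℝ) : Set E :=
  {b | s * ‖b‖ ≤ |⟪v, b⟫|}

theorem isCone_doubleCone (v : E) (s : ℝ) : IsCone (doubleCone v s) := by
  intro r hr b
  simp only [doubleCone, mem_ofPred_eq, norm_smul, Real.norm_of_nonneg hr.le, inner_smul_right,
    abs_mul, abs_of_pos hr, mul_left_comm s, mul_le_mul_iff_right₀ hr]

theorem measurableSet_doubleCone [MeasurableSpace E] [OpensMeasurableSpace E] (v : E) (s : ℝ) :
    MeasurableSet (doubleCone v s) :=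
  (isClosed_le (by fun_prop) (by fun_prop)).measurableSet

end Cone

section PolarCoordinates

variable {E : Type*} [NormedAddCommGroup E] [NormedSpace ℝ E] [FiniteDimensional ℝ E]
  [MeasurableSpace E] [BorelSpace E] (μ : Measure E) [μ.IsAddHaarMeasure]

theorem measure_norm_preimage_inter_cone [Nontrivial E] {I : Set ℝ} (hI : MeasurableSet I)
    {C : Set E} (hC : MeasurableSet C) (hcone : IsCone C) :
    μ (norm ⁻¹' I ∩ C) = μ.toSphere (Subtype.val ⁻¹' C) *
      Measure.volumeIoiPow (finrank ℝ E - 1) (Subtype.val ⁻¹' I) := by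
  have hpreimage : (norm ⁻¹' I ∩ C) \ {0} = Subtype.val '' (homeomorphUnitSphereProd E ⁻¹'
      ((Subtype.val ⁻¹' C) ×ˢ (Subtype.val ⁻¹' I))) := by
    ext b
    have hdir (hb : b ≠ 0) : ‖b‖⁻¹ • b ∈ C ↔ b ∈ C := hcone (inv_pos.2 (norm_pos_iff.2 hb)) b
    simp only [mem_sdiff, mem_inter_iff, mem_preimage, mem_singleton_iff, mem_image, mem_prod,
      Subtype.exists, mem_compl_iff, homeomorphUnitSphereProd_apply_fst_coe,
      homeomorphUnitSphereProd_apply_snd_coe, exists_and_right, exists_eq_right]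
    grind
  rw [← measure_sdiff_null (measure_singleton (0 : E)), hpreimage,
    ← (MeasurableEmbedding.subtype_coe (measurableSet_singleton (0 : E)).compl).comap_apply,
    μ.measurePreserving_homeomorphUnitSphereProd.measure_preimage
      ((measurable_subtype_coe hC).prod (measurable_subtype_coe hI)).nullMeasurableSet,
    Measure.prod_prod]

open scoped Pointwise in
theorem toSphere_preimage_cone {C : Set E} (hC : MeasurableSet C) (hcone : IsCone C) :
    μ.toSphere (Subtype.val ⁻¹' C) = finrank ℝ E * μ (ball 0 1 ∩ C) := by
  nontriviality E
  have hsmul : Ioo (0 : ℝ) 1 • (sphere (0 : E) 1 ∩ C : Set E) = (ball 0 1 ∩ C) \ {0} := by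
    ext b
    constructor
    · rintro ⟨r, ⟨hr0, hr1⟩, y, ⟨hy, hyC⟩, rfl⟩
      have hnorm : ‖r • y‖ = r := by
        rw [norm_smul, mem_sphere_zero_iff_norm.1 hy, mul_one, Real.norm_of_nonneg hr0.le]
      exact ⟨⟨mem_ball_zero_iff.2 (hnorm.trans_lt hr1), (hcone hr0 y).2 hyC⟩,
        norm_pos_iff.1 (hr0.trans_eq hnorm.symm)⟩
    · rintro ⟨⟨hb1, hbC⟩, hb0⟩
      have hb : 0 < ‖b‖ := norm_pos_iff.2 hb0
      refine ⟨‖b‖, ⟨hb, mem_ball_zero_iff.1 hb1⟩, ‖b‖⁻¹ • b,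
        ⟨mem_sphere_zero_iff_norm.2 (norm_smul_inv_norm hb0), (hcone (inv_pos.2 hb) b).2 hbC⟩,
        smul_inv_smul₀ hb.ne' b⟩
  rw [μ.toSphere_apply' (measurable_subtype_coe hC), Subtype.image_preimage_coe, hsmul,
    measure_sdiff_null (measure_singleton _)]

end PolarCoordinates

section SphericalCap

theorem one_sub_two_mul_min_add_sq_le {s : ℝ} (hs : 0 ≤ s) (hs1 : s ≤ 1) :
    1 - 2 * min s (Real.exp (-(s ^ 2 / 2))) * s + min s (Real.exp (-(s ^ 2 / 2))) ^ 2 ≤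
      Real.exp (-(s ^ 2 / 2)) ^ 2 := by
  set r := Real.exp (-(s ^ 2 / 2)) with hr
  rcases le_or_gt s r with hsr | hrs
  · have hr_sq : r ^ 2 = Real.exp (-s ^ 2) := by
      rw [hr, ← Real.exp_nat_mul]
      congr 1
      push_cast
      ring
    rw [min_eq_left hsr, hr_sq]
    linarith [Real.add_one_le_exp (-s ^ 2)]
  · have hr_lower : 1 - s ^ 2 / 2 ≤ r := by linarith [Real.add_one_le_exp (-(s ^ 2 / 2))]
    have hs_lower : 0 ≤ s ^ 2 + s - 1 := by nlinarith
    have hrs_lower : 1 ≤ 2 * r * s := by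
      nlinarith [mul_le_mul_of_nonneg_right hr_lower hs,
        mul_nonneg (sub_nonneg.2 hs1) hs_lower]
    rw [min_eq_right hrs.le]
    linarith

variable {E : Type*} [NormedAddCommGroup E] [InnerProductSpace ℝ E]

theorem cap_subset_closedBall {v : E} (hv : ‖v‖ ≤ 1) {s c r : ℝ} (hc : 0 ≤ c) (hcr : c ≤ r)
    (h : 1 - 2 * c * s + c ^ 2 ≤ r ^ 2) :
    ball 0 1 ∩ {b | s * ‖b‖ ≤ ⟪v, b⟫} ⊆ closedBall (c • v) r := by
  rintro b ⟨hb, hvb⟩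
  rw [mem_ball_zero_iff] at hb
  rw [mem_closedBall, dist_eq_norm]
  refine le_of_sq_le_sq ?_ (hc.trans hcr)
  calc ‖b - c • v‖ ^ 2 = ‖b‖ ^ 2 - 2 * c * ⟪v, b⟫ + c ^ 2 * ‖v‖ ^ 2 := by
        rw [norm_sub_sq_real, norm_smul, inner_smul_right, mul_pow, real_inner_comm,
          Real.norm_eq_abs, sq_abs, mul_assoc]
    _ ≤ ‖b‖ - 2 * c * (s * ‖b‖) + c ^ 2 * 1 := by
        gcongr
        · nlinarith [norm_nonneg b]
        · exact hvb
        · exact pow_le_one₀ (norm_nonneg v) hv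
    _ = ‖b‖ * (1 - 2 * c * s + c ^ 2) + (1 - ‖b‖) * c ^ 2 := by ring
    _ ≤ ‖b‖ * r ^ 2 + (1 - ‖b‖) * r ^ 2 := by
        have : 0 ≤ 1 - ‖b‖ := by linarith
        gcongr
    _ = r ^ 2 := by ring

theorem exists_cap_subset_closedBall {v : E} (hv : ‖v‖ ≤ 1) {s : ℝ} (hs : 0 ≤ s) :
    ∃ a : E, ball 0 1 ∩ {b | s * ‖b‖ ≤ ⟪v, b⟫} ⊆ closedBall a (Real.exp (-(s ^ 2 / 2))) := by
  rcases le_or_gt s 1 with hs1 | hs1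
  · -- `s • v` minimizes the distance to the rim, but the ball must also reach the apex `0`.
    exact ⟨min s (Real.exp (-(s ^ 2 / 2))) • v,
      cap_subset_closedBall hv (le_min hs (Real.exp_pos _).le) (min_le_right _ _)
        (one_sub_two_mul_min_add_sq_le hs hs1)⟩
  · refine ⟨0, fun b ⟨_, hvb⟩ => ?_⟩
    have hb : ‖b‖ = 0 := by
      have : s * ‖b‖ ≤ 1 * ‖b‖ :=
        hvb.trans ((real_inner_le_norm v b).trans (by gcongr))
      nlinarith [norm_nonneg b]
    simpa [norm_eq_zero.1 hb] using (Real.exp_pos _).le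

variable [FiniteDimensional ℝ E] [MeasurableSpace E] [BorelSpace E]
  (μ : Measure E) [μ.IsAddHaarMeasure]

theorem measure_cap_le {v : E} (hv : ‖v‖ ≤ 1) {s : ℝ} (hs : 0 ≤ s) :
    μ (ball 0 1 ∩ {b | s * ‖b‖ ≤ ⟪v, b⟫}) ≤
      ENNReal.ofReal (Real.exp (-(finrank ℝ E * s ^ 2 / 2))) * μ (ball 0 1) := by
  obtain ⟨a, ha⟩ := exists_cap_subset_closedBall hv hs
  have hpow : Real.exp (-(s ^ 2 / 2)) ^ finrank ℝ E =
      Real.exp (-(finrank ℝ E * s ^ 2 / 2)) := by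
    rw [← Real.exp_nat_mul]
    congr 1
    ring
  calc μ (ball 0 1 ∩ {b | s * ‖b‖ ≤ ⟪v, b⟫})
      ≤ μ (closedBall a (Real.exp (-(s ^ 2 / 2)))) := measure_mono ha
    _ = _ := by rw [μ.addHaar_closedBall a (Real.exp_pos _).le, hpow]

theorem measure_ball_inter_doubleCone_le {v : E} (hv : ‖v‖ ≤ 1) {s : ℝ} (hs : 0 ≤ s) :
    μ (ball 0 1 ∩ doubleCone v s) ≤
      ENNReal.ofReal (2 * Real.exp (-(finrank ℝ E * s ^ 2 / 2))) * μ (ball 0 1) := by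
  have hcover : ball 0 1 ∩ doubleCone v s =
      (ball 0 1 ∩ {b | s * ‖b‖ ≤ ⟪v, b⟫}) ∪ (ball 0 1 ∩ {b | s * ‖b‖ ≤ ⟪-v, b⟫}) := by
    simp only [doubleCone, le_abs, inner_neg_left, ofPred_or, inter_union_distrib_left]
  rw [hcover, two_mul, ENNReal.ofReal_add (by positivity) (by positivity), add_mul]
  exact (measure_union_le _ _).trans
    (add_le_add (measure_cap_le μ hv hs) (measure_cap_le μ (by rwa [norm_neg]) hs))

theorem measure_norm_preimage_inter_doubleCone_le {v : E} (hv : ‖v‖ ≤ 1) {s : ℝ} (hs : 0 ≤ s)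
    {I : Set ℝ} (hI : MeasurableSet I) :
    μ (norm ⁻¹' I ∩ doubleCone v s) ≤
      ENNReal.ofReal (2 * Real.exp (-(finrank ℝ E * s ^ 2 / 2))) * μ (norm ⁻¹' I) := by
  set C := doubleCone v s
  set κ := ENNReal.ofReal (2 * Real.exp (-(finrank ℝ E * s ^ 2 / 2))) with hκ
  rcases subsingleton_or_nontrivial E with _ | _
  · have hone_le : 1 ≤ κ := by
      rw [hκ, finrank_zero_of_subsingleton]
      norm_num
    calc μ (norm ⁻¹' I ∩ C) ≤ 1 * μ (norm ⁻¹' I) := by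
          rw [one_mul]
          exact measure_mono inter_subset_left
      _ ≤ κ * μ (norm ⁻¹' I) := by gcongr
  · have hC : MeasurableSet C := measurableSet_doubleCone v s
    have hcone := isCone_doubleCone v s
    have hsphere : μ.toSphere (Subtype.val ⁻¹' C) ≤ κ * μ.toSphere univ := by
      rw [toSphere_preimage_cone μ hC hcone, μ.toSphere_apply_univ, mul_left_comm]
      gcongr
      exact measure_ball_inter_doubleCone_le μ hv hs
    have hradial := measure_norm_preimage_inter_cone μ hI MeasurableSet.univ IsCone.univ
    rw [inter_univ, preimage_univ] at hradial
    rw [measure_norm_preimage_inter_cone μ hI hC hcone, hradial, ← mul_assoc]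
    gcongr

theorem prod_inter_doubleCone_le {α : Type*} [MeasurableSpace α] (ν : Measure α)
    {v : E} (hv : ‖v‖ ≤ 1) {s : ℝ} (hs : 0 ≤ s) {B : Set (α × ℝ)} (hB : MeasurableSet B) :
    (ν.prod μ) ({p | (p.1, ‖p.2‖) ∈ B} ∩ {p | p.2 ∈ doubleCone v s}) ≤
      ENNReal.ofReal (2 * Real.exp (-(finrank ℝ E * s ^ 2 / 2))) *
        (ν.prod μ) {p | (p.1, ‖p.2‖) ∈ B} := by
  have hBmeas : MeasurableSet {p : α × E | (p.1, ‖p.2‖) ∈ B} :=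
    (measurable_fst.prodMk measurable_snd.norm) hB
  have hCmeas : MeasurableSet {p : α × E | p.2 ∈ doubleCone v s} :=
    measurable_snd (measurableSet_doubleCone v s)
  rw [Measure.prod_apply (hBmeas.inter hCmeas), Measure.prod_apply hBmeas,
    ← lintegral_const_mul _ (measurable_measure_prodMk_left hBmeas)]
  exact lintegral_mono fun a =>
    measure_norm_preimage_inter_doubleCone_le μ hv hs (measurable_prodMk_left hB)

end SphericalCap

theorem norm_le_of_abs_inner_le {ι F : Type*} [Fintype ι] [NormedAddCommGroup F]
    [InnerProductSpace ℝ F] (b : OrthonormalBasis ι ℝ F) {ε : ℝ} (hε : 0 ≤ ε) {a : F}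
    (ha : ∀ i, |⟪b i, a⟫| ≤ ε) :
    ‖a‖ ≤ √(Fintype.card ι) * ε := by
  refine le_of_sq_le_sq ?_ (by positivity)
  calc ‖a‖ ^ 2 = ∑ i, |⟪b i, a⟫| ^ 2 := (b.sum_sq_norm_inner_right a).symm
    _ ≤ ∑ _i : ι, ε ^ 2 := Finset.sum_le_sum fun i _ => by gcongr; exact ha i
    _ = (√(Fintype.card ι) * ε) ^ 2 := by
        rw [Finset.sum_const, Finset.card_univ, nsmul_eq_mul, mul_pow, Real.sq_sqrt (by positivity)]

section OrthogonalProjection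

variable {E : Type*} [NormedAddCommGroup E] [InnerProductSpace ℝ E]

theorem abs_inner_le_abs_inner_orthogonal_add (K : Submodule ℝ E) [K.HasOrthogonalProjection]
    {x : E} (hx : ‖x‖ ≤ 1) (y : E) :
    |⟪x, y⟫| ≤ |⟪(Kᗮ.orthogonalProjectionOnto x : E), y⟫| + ‖K.orthogonalProjectionOnto y‖ := by
  have hdecomp : ⟪x, y⟫ = ⟪(Kᗮ.orthogonalProjectionOnto x : E), y⟫ +
      ⟪x, (K.orthogonalProjectionOnto y : E)⟫ := by
    change _ = ⟪Kᗮ.starProjection x, y⟫ + ⟪x, K.starProjection y⟫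
    rw [K.starProjection_orthogonal_val, inner_sub_left, K.inner_starProjection_left_eq_right,
      sub_add_cancel]
  calc |⟪x, y⟫| ≤ |⟪(Kᗮ.orthogonalProjectionOnto x : E), y⟫| +
        |⟪x, (K.orthogonalProjectionOnto y : E)⟫| := hdecomp ▸ abs_add_le _ _
    _ ≤ _ := by
        gcongr
        exact (abs_real_inner_le_norm _ _).trans (mul_le_of_le_one_left (norm_nonneg _) hx)

variable [FiniteDimensional ℝ E] [MeasurableSpace E] [BorelSpace E]

theorem measurePreserving_orthogonalProjectionOnto_prod (K : Submodule ℝ E) :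
    MeasurePreserving
      (fun w : E => (K.orthogonalProjectionOnto w, Kᗮ.orthogonalProjectionOnto w)) := by
  have h := (WithLp.volume_preserving_ofLp K Kᗮ).comp K.orthogonalDecomposition.measurePreserving
  simpa only [Function.comp_def, Submodule.orthogonalDecomposition_apply] using h

theorem volume_inter_doubleCone_le (K : Submodule ℝ E) {v : Kᗮ} (hv : ‖v‖ ≤ 1) {s : ℝ}
    (hs : 0 ≤ s) {B : Set (K × ℝ)} (hB : MeasurableSet B) :
    volume ({w : E | (K.orthogonalProjectionOnto w, ‖w‖) ∈ B} ∩ doubleCone (v : E) s) ≤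
      ENNReal.ofReal (2 * Real.exp (-(finrank ℝ Kᗮ * s ^ 2 / 2))) *
        volume {w : E | (K.orthogonalProjectionOnto w, ‖w‖) ∈ B} := by
  set f : E → K × Kᗮ := fun w => (K.orthogonalProjectionOnto w, Kᗮ.orthogonalProjectionOnto w)
  have hf : MeasurePreserving f := measurePreserving_orthogonalProjectionOnto_prod K
  set B' : Set (K × ℝ) := (fun p => (p.1, √(‖p.1‖ ^ 2 + p.2 ^ 2))) ⁻¹' B
  have hB' : MeasurableSet B' := by
    have : Measurable fun p : K × ℝ => (p.1, √(‖p.1‖ ^ 2 + p.2 ^ 2)) := by fun_prop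
    exact this hB
  have hBmeas : MeasurableSet {p : K × Kᗮ | (p.1, ‖p.2‖) ∈ B'} :=
    (measurable_fst.prodMk measurable_snd.norm) hB'
  have hpreimage : {w : E | (K.orthogonalProjectionOnto w, ‖w‖) ∈ B} =
      f ⁻¹' {p | (p.1, ‖p.2‖) ∈ B'} := by
    ext w
    simp only [mem_ofPred_eq, mem_preimage, B', f, ← K.norm_sq_eq_add_norm_sq_projection w,
      Real.sqrt_sq (norm_nonneg w)]
  have hsubset : doubleCone (v : E) s ⊆ f ⁻¹' {p | p.2 ∈ doubleCone v s} := by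
    intro w hw
    rw [mem_preimage, mem_ofPred_eq, doubleCone, mem_ofPred_eq,
      Kᗮ.inner_orthogonalProjectionOnto_eq_of_mem_left]
    exact (mul_le_mul_of_nonneg_left (Kᗮ.norm_orthogonalProjectionOnto_apply_le w) hs).trans hw
  rw [hpreimage, hf.measure_preimage hBmeas.nullMeasurableSet]
  calc volume (f ⁻¹' {p | (p.1, ‖p.2‖) ∈ B'} ∩ doubleCone (v : E) s)
      ≤ volume (f ⁻¹' ({p | (p.1, ‖p.2‖) ∈ B'} ∩ {p | p.2 ∈ doubleCone v s})) :=
        measure_mono (inter_subset_inter_right _ hsubset)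
    _ = (volume.prod volume) ({p | (p.1, ‖p.2‖) ∈ B'} ∩ {p | p.2 ∈ doubleCone v s}) :=
        hf.measure_preimage (hBmeas.inter
          (measurable_snd (measurableSet_doubleCone v s))).nullMeasurableSet
    _ ≤ _ := prod_inter_doubleCone_le volume volume hv hs hB'

theorem toSphere_inter_abs_inner_ge_le (K : Submodule ℝ E) {v : Kᗮ} (hv : ‖v‖ ≤ 1) {s : ℝ}
    (hs : 0 ≤ s) {T : Set K} (hT : MeasurableSet T) :
    (volume : Measure E).toSphere (Subtype.val ⁻¹'
        (K.orthogonalProjectionOnto ⁻¹' T ∩ {y | s ≤ |⟪(v : E), y⟫|})) ≤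
      ENNReal.ofReal (2 * Real.exp (-(finrank ℝ Kᗮ * s ^ 2 / 2))) *
        (volume : Measure E).toSphere (Subtype.val ⁻¹' (K.orthogonalProjectionOnto ⁻¹' T)) := by
  set C : Set E := {w | ‖w‖⁻¹ • K.orthogonalProjectionOnto w ∈ T}
  set D : Set E := doubleCone (v : E) s
  have hC : MeasurableSet C := by
    have : Measurable fun w : E => ‖w‖⁻¹ • K.orthogonalProjectionOnto w := by fun_prop
    exact this hT
  have hCcone : IsCone C := isCone_inv_norm_smul_map_mem K.orthogonalProjectionOnto.toLinearMap T
  have hCsphere : (Subtype.val ⁻¹' (K.orthogonalProjectionOnto ⁻¹' T) : Set (sphere (0 : E) 1)) =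
      Subtype.val ⁻¹' C := by
    ext y
    simp [C]
  have hDsphere : (Subtype.val ⁻¹' {y | s ≤ |⟪(v : E), y⟫|} : Set (sphere (0 : E) 1)) =
      Subtype.val ⁻¹' D := by
    ext y
    simp [D, doubleCone]
  set B : Set (K × ℝ) := {p | p.2 < 1 ∧ p.2⁻¹ • p.1 ∈ T}
  have hB : MeasurableSet B := by
    have : Measurable fun p : K × ℝ => p.2⁻¹ • p.1 := by fun_prop
    exact (measurableSet_lt measurable_snd measurable_const).inter (this hT)
  have hball : ball 0 1 ∩ C = {w : E | (K.orthogonalProjectionOnto w, ‖w‖) ∈ B} := by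
    ext w
    simp [B, C]
  rw [preimage_inter, hCsphere, hDsphere, ← preimage_inter,
    toSphere_preimage_cone volume (hC.inter (measurableSet_doubleCone _ s))
      (hCcone.inter (isCone_doubleCone _ s)),
    toSphere_preimage_cone volume hC hCcone, mul_left_comm, ← inter_assoc, hball]
  gcongr
  exact volume_inter_doubleCone_le K hv hs hB

end OrthogonalProjection

section SphereUniform

variable {d : ℕ}

theorem sphereUniform_apply {A : Set (EuclideanSpace ℝ (Fin d))} (hA : MeasurableSet A) :
    sphereUniform d A =
      ((volume : Measure (EuclideanSpace ℝ (Fin d))).toSphere univ)⁻¹ *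
        (volume : Measure (EuclideanSpace ℝ (Fin d))).toSphere (Subtype.val ⁻¹' A) := by
  rw [sphereUniform, Measure.map_apply measurable_subtype_coe hA, Measure.smul_apply, smul_eq_mul]

theorem sphereUniform_sphere_inter {A : Set (EuclideanSpace ℝ (Fin d))} (hA : MeasurableSet A) :
    sphereUniform d (sphere 0 1 ∩ A) = sphereUniform d A := by
  rw [sphereUniform_apply (isClosed_sphere.measurableSet.inter hA), sphereUniform_apply hA,
    Subtype.preimage_coe_self_inter]

theorem cond_le_of_measure_inter_le {Ω : Type*} [MeasurableSpace Ω] {μ : Measure Ω} {S A : Set Ω}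
    (hS : MeasurableSet S) {c : ENNReal} (h : μ (S ∩ A) ≤ c * μ S) :
    ProbabilityTheory.cond μ S A ≤ c := by
  rw [ProbabilityTheory.cond_apply hS, mul_comm, ← div_eq_mul_inv]
  exact ENNReal.div_le_of_le_mul h

theorem cond_sphereUniform_abs_inner_ge_le (K : Submodule ℝ (EuclideanSpace ℝ (Fin d)))
    {T : Set K} (hT : MeasurableSet T) {δ : ℝ} (hTδ : T ⊆ closedBall 0 δ)
    {x : EuclideanSpace ℝ (Fin d)} (hx : ‖x‖ ≤ 1) {s : ℝ} (hs : 0 ≤ s) :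
    ProbabilityTheory.cond (sphereUniform d) (sphere 0 1 ∩ K.orthogonalProjectionOnto ⁻¹' T)
        {y | s + δ ≤ |⟪x, y⟫|} ≤
      ENNReal.ofReal (2 * Real.exp (-(finrank ℝ Kᗮ * s ^ 2 / 2))) := by
  set X := K.orthogonalProjectionOnto ⁻¹' T
  set v := Kᗮ.orthogonalProjectionOnto x
  have hX : MeasurableSet X := K.orthogonalProjectionOnto.continuous.measurable hT
  have hv : ‖v‖ ≤ 1 := (Kᗮ.norm_orthogonalProjectionOnto_apply_le x).trans hx
  have hVmeas : MeasurableSet {y | s ≤ |⟪(v : EuclideanSpace ℝ (Fin d)), y⟫|} :=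
    measurableSet_le (by fun_prop) (by fun_prop)
  have hsubset : sphere 0 1 ∩ X ∩ {y | s + δ ≤ |⟪x, y⟫|} ⊆
      X ∩ {y | s ≤ |⟪(v : EuclideanSpace ℝ (Fin d)), y⟫|} := by
    rintro y ⟨⟨_, hyX⟩, hy⟩
    have hδ : ‖K.orthogonalProjectionOnto y‖ ≤ δ := mem_closedBall_zero_iff.1 (hTδ hyX)
    have hsplit := abs_inner_le_abs_inner_orthogonal_add K hx y
    rw [mem_ofPred_eq] at hy
    exact ⟨hyX, show s ≤ _ by linarith⟩
  refine cond_le_of_measure_inter_le (isClosed_sphere.measurableSet.inter hX)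
    ((measure_mono hsubset).trans ?_)
  rw [sphereUniform_sphere_inter hX, sphereUniform_apply hX,
    sphereUniform_apply (hX.inter hVmeas), mul_left_comm]
  gcongr
  exact toSphere_inter_abs_inner_ge_le K hv hs hT

end SphereUniform

theorem exists_orthonormalBasis_span_range {E ι : Type*} [NormedAddCommGroup E]
    [InnerProductSpace ℝ E] [Fintype ι] {x : ι → E} (hx : Orthonormal ℝ x) :
    ∃ b : OrthonormalBasis ι ℝ (Submodule.span ℝ (range x)), ∀ i, (b i : E) = x i := by
  have hspan : ⇑(Basis.span hx.linearIndependent) =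
      fun i => ⟨x i, Submodule.subset_span (mem_range_self i)⟩ :=
    funext fun i => Basis.span_apply hx.linearIndependent i
  refine ⟨(Basis.span hx.linearIndependent).toOrthonormalBasis (hspan ▸ orthonormal_span hx),
    fun i => ?_⟩
  rw [Basis.coe_toOrthonormalBasis, hspan]

theorem conditioned_sphere_concentration_general {d k : ℕ} {x : Fin k → EuclideanSpace ℝ (Fin d)}
    (hx : Orthonormal ℝ x) {x₀ : EuclideanSpace ℝ (Fin d)} (hx₀ : ‖x₀‖ ≤ 1)
    {ε τ : ℝ} (hε : 0 ≤ ε) (hτ : √k * ε ≤ τ) :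
    ProbabilityTheory.cond (sphereUniform d) (sphere 0 1 ∩ {w | ∀ i, |⟪x i, w⟫| ≤ ε})
        {y | τ ≤ |⟪x₀, y⟫|} ≤
      ENNReal.ofReal (2 * Real.exp (-((d - k) * (τ - √k * ε) ^ 2 / 2))) := by
  set K := Submodule.span ℝ (range x)
  obtain ⟨b, hb⟩ := exists_orthonormalBasis_span_range hx
  have hcodim : (finrank ℝ Kᗮ : ℝ) = d - k := by
    have hdims := K.finrank_add_finrank_orthogonal
    rw [finrank_eq_card_basis b.toBasis, Fintype.card_fin, finrank_euclideanSpace_fin] at hdims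
    rw [eq_sub_iff_add_eq', ← Nat.cast_add, hdims]
  set T : Set K := {a | ∀ i, |⟪b i, a⟫| ≤ ε}
  have hT : MeasurableSet T := by
    simp only [T, ofPred_forall]
    exact MeasurableSet.iInter fun i => measurableSet_le (by fun_prop) (by fun_prop)
  have hslab : {w | ∀ i, |⟪x i, w⟫| ≤ ε} = K.orthogonalProjectionOnto ⁻¹' T := by
    ext w
    simp only [T, mem_preimage, mem_ofPred_eq, K.inner_orthogonalProjectionOnto_eq_of_mem_left, hb]
  have hTball : T ⊆ closedBall 0 (√k * ε) := by
    intro a ha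
    simpa using norm_le_of_abs_inner_le b hε ha
  have htail := cond_sphereUniform_abs_inner_ge_le K hT hTball hx₀ (sub_nonneg.2 hτ)
  rwa [sub_add_cancel, ← hslab, hcodim] at htail

theorem sqrt_mul_one_div_cube_le {k d : ℕ} (hd : 0 < d) (hkd : k ≤ d) :
    √k * (1 / (d : ℝ) ^ 3) ≤ 1 / (d : ℝ) ^ 2 := by
  have hsqrt : √k ≤ (d : ℝ) := by
    rw [Real.sqrt_le_left (by positivity)]
    exact_mod_cast hkd.trans (Nat.le_self_pow two_ne_zero d)
  calc √k * (1 / (d : ℝ) ^ 3) ≤ d * (1 / (d : ℝ) ^ 3) := by gcongr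
    _ = 1 / (d : ℝ) ^ 2 := by field_simp

theorem two_mul_exp_le_of_le_div_three {k d t r : ℝ} (hd : 0 < d) (hk : k ≤ d / 3) (ht : 1 ≤ t)
    (hr : √(t / d) ≤ r) :
    2 * Real.exp (-((d - k) * r ^ 2 / 2)) ≤ 2 * √t * Real.exp (-t / 3) := by
  have hexponent : 2 * t / 3 ≤ (d - k) * r ^ 2 := by
    calc 2 * t / 3 = 2 * d / 3 * (t / d) := by field_simp
      _ ≤ (d - k) * r ^ 2 := by
        gcongr
        · linarith
        · linarith
        · exact (Real.sqrt_le_left ((Real.sqrt_nonneg _).trans hr)).1 hr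
  calc 2 * Real.exp (-((d - k) * r ^ 2 / 2)) ≤ 2 * 1 * Real.exp (-t / 3) := by
        rw [mul_one]
        gcongr
        linarith
    _ ≤ 2 * √t * Real.exp (-t / 3) := by
        gcongr
        exact Real.one_le_sqrt.2 ht

/-- Concentration for a random unit vector conditioned to be `1/d³`-approximately
orthogonal to `k ≤ d/3 - 1` orthonormal vectors: for any fixed `x` in the unit ball and
`t ≥ 2`, `ℙ(|⟨x, y⟩| ≥ √(t/d) + 1/d²) ≤ 2√t e^{-t/3}`. -/
theorem conditioned_sphere_concentration (d k : ℕ) (hd : 4 ≤ d)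
    (hk : (k : ℝ) ≤ (d : ℝ) / 3 - 1)
    (x : Fin k → EuclideanSpace ℝ (Fin d)) (hx : Orthonormal ℝ x)
    (x₀ : EuclideanSpace ℝ (Fin d)) (hx₀ : x₀ ∈ Metric.closedBall (0 : EuclideanSpace ℝ (Fin d)) 1)
    (S : Set (EuclideanSpace ℝ (Fin d)))
    (hS : S = Metric.sphere (0 : EuclideanSpace ℝ (Fin d)) 1 ∩
        {w | ∀ i : Fin k, |⟪x i, w⟫| ≤ 1 / (d : ℝ) ^ 3})
    (t : ℝ) (ht : 2 ≤ t) :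
    ProbabilityTheory.cond (sphereUniform d) S {y | Real.sqrt (t / d) + 1 / (d : ℝ) ^ 2 ≤ |⟪x₀, y⟫|}
      ≤ ENNReal.ofReal (2 * Real.sqrt t * Real.exp (-t / 3)) := by
  have hkd : k ≤ d := by
    exact_mod_cast (by linarith [d.cast_nonneg (α := ℝ)] : (k : ℝ) ≤ d)
  have hslab_le : √k * (1 / (d : ℝ) ^ 3) ≤ 1 / (d : ℝ) ^ 2 :=
    sqrt_mul_one_div_cube_le (by omega) hkd
  have hthreshold : √(t / d) ≤ √(t / d) + 1 / (d : ℝ) ^ 2 - √k * (1 / (d : ℝ) ^ 3) := by linarith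
  rw [hS]
  exact (conditioned_sphere_concentration_general hx (mem_closedBall_zero_iff.1 hx₀) (by positivity)
    (sub_nonneg.1 ((Real.sqrt_nonneg _).trans hthreshold))).trans
    (ENNReal.ofReal_le_ofReal
      (two_mul_exp_le_of_le_div_three (by positivity) (by linarith) (by linarith) hthreshold))
end
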